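/- arXiv:1906.05044 — 5 statements merged into one kernel-verified Lean document; each statement's English description precedes it below -/
import Mathlib

section
/- For all sufficiently large n, in the (1:1) WMaker–WBreaker Hamilton cycle game on the edge set of K_n with WBreaker moving first, WMaker has a strategy that guarantees that after at most n+6 of her moves, the graph M of her claimed edges contains a Hamilton cycle of K_n. -/
/-!
WMaker wins by building a long path, closing it early into a cycle, and absorbing the last two
vertices into that cycle by a detour; apart from this she wastes almost no move.

Let `U` be the set of vertices not yet visited. WMaker wants WBreaker to have no edge inside `U`
(`Ctrl`). Since he moves along a walk too, an edge he claims inside `U` ends where he stands, and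
WMaker visits that end at once; his next edge, if it goes back to `U`, then starts at her position
and is the only blocked edge from there to `U`. In the same way she deals with an edge between
`U` and the first two vertices `p₀`, `p₁` of her path, except that during the long first stage
(`win_long`) she only ensures that at most two vertices of `U` carry an edge of WBreaker at all.
These exceptional vertices form the set `H`, and are visited one after the other when about a
hundred vertices are left (`goal`): the measure `delay` shows that WBreaker cannot keep her away
from `H` for long, unless he leaves a vertex of `H` towards `U`, a case treated in `win_c`.

Once `H` is empty, WMaker moves from the end `p` of her path to `p₀`, leaving out one vertex `x` of
`U` that may have become bad (`close`). The cycle so formed can be opened at either of the two edges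
at `p₀`, so from now on she has spanning paths from her position to two different vertices, and
keeps both free of WBreaker's edges (`win_post`). When one vertex `y` besides `x` is left,
WBreaker can block only one of the two closing edges, and she completes a cycle that misses only
`x` and `y`.

A vertex `a` off the cycle at which WBreaker does not stand is absorbed in three moves (`absorb`):
she jumps along a chord to a vertex `z` of the cycle, goes to `a`, and from there to one of the two
neighbours of `z` on the cycle; again only one of these can be blocked. That suitable vertices
exist follows from the degree bound in `Base`: WBreaker needs three moves to claim two further edges
at a vertex, so that even a vertex of large WBreaker-degree leaves a third of all edges free. If
WBreaker stands at the last vertex, WMaker waits for one move by stepping along the cycle. Hence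
the two absorptions cost at most `3 + 4` moves.

The path, the closing edges and the absorptions together take at most `n + 6` moves. The game is
analysed on abstract positions (`St`, `St.Win`), and the resulting strategy is translated back to
walks at the end.
-/

open scoped Classical

/-- The set of edges claimed during the first `t` moves of a walk `w` on the
vertices of `K_n` (`w i` is the position after `i` moves). -/
def claimedEdges {n : ℕ} (w : ℕ → Fin n) (t : ℕ) : Set (Sym2 (Fin n)) :=
  {e | ∃ i, i < t ∧ e = s(w i, w (i + 1))}

/-- The simple graph spanned by the edges claimed during the first `t` moves of
the walk `w`. -/
def walkGraph {n : ℕ} (w : ℕ → Fin n) (t : ℕ) : SimpleGraph (Fin n) :=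
  SimpleGraph.fromEdgeSet (claimedEdges w t)

/-- A strategy for WMaker in the `(1:1)` WMaker–WBreaker game on `E(K_n)` in which
WBreaker moves first.  Given WBreaker's walk `b` (where `b j` is WBreaker's position
after his `j`-th move), `pos i b` is WMaker's position after her `i`-th move.
The causality condition states that WMaker's position after `i` moves may depend
only on the part of WBreaker's walk that has already been played at that moment,
namely `b 0, …, b (max i 1)`. -/
structure MakerStrategy (n : ℕ) where
  pos : ℕ → (ℕ → Fin n) → Fin n
  causal : ∀ i b b', (∀ j ≤ max i 1, b j = b' j) → pos i b = pos i b'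

section Game

/-! ### The abstract game -/

/-- A position of the game with WBreaker to move: `p` and `v` are the vertices at which
WMaker and WBreaker stand, `M` and `B` the graphs they have claimed. -/
structure St (n : ℕ) where
  p : Fin n
  v : Fin n
  M : SimpleGraph (Fin n)
  B : SimpleGraph (Fin n)

namespace St

variable {n : ℕ}

/-- WBreaker's graph after he moves from his position to `w`. -/
def bb (σ : St n) (w : Fin n) : SimpleGraph (Fin n) := σ.B ⊔ SimpleGraph.edge σ.v w

/-- The position after a full round: WBreaker moves to `w`, then WMaker moves to `u`. -/
def rd (σ : St n) (w u : Fin n) : St n :=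
  ⟨u, w, σ.M ⊔ SimpleGraph.edge σ.p u, σ.bb w⟩

/-- `w` is a legal move of WBreaker. -/
def Br (σ : St n) (w : Fin n) : Prop := w ≠ σ.v ∧ ¬ σ.M.Adj σ.v w

/-- `u` is a legal answer of WMaker to WBreaker's move to `w`. -/
def Mk (σ : St n) (w u : Fin n) : Prop := u ≠ σ.p ∧ ¬ (σ.bb w).Adj σ.p u

/-- WMaker can force a Hamilton cycle within `k` further moves of hers. -/
def Win : ℕ → St n → Prop
  | 0, σ => σ.M.IsHamiltonian
  | k + 1, σ => σ.M.IsHamiltonian ∨ ∀ w, σ.Br w → ∃ u, σ.Mk w u ∧ Win k (σ.rd w u)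

theorem bb_adj (σ : St n) (w x y : Fin n) : (σ.bb w).Adj x y ↔
    σ.B.Adj x y ∨ ((x = σ.v ∧ y = w ∨ x = w ∧ y = σ.v) ∧ x ≠ y) := by
  simp only [bb, SimpleGraph.sup_adj, SimpleGraph.edge_adj]

theorem rd_M_adj (σ : St n) (w u x y : Fin n) : (σ.rd w u).M.Adj x y ↔
    σ.M.Adj x y ∨ ((x = σ.p ∧ y = u ∨ x = u ∧ y = σ.p) ∧ x ≠ y) := by
  simp only [rd, SimpleGraph.sup_adj, SimpleGraph.edge_adj]

@[simp] theorem rd_p (σ : St n) (w u : Fin n) : (σ.rd w u).p = u := rfl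
@[simp] theorem rd_v (σ : St n) (w u : Fin n) : (σ.rd w u).v = w := rfl
@[simp] theorem rd_B (σ : St n) (w u : Fin n) : (σ.rd w u).B = σ.bb w := rfl

theorem M_le_rd (σ : St n) (w u : Fin n) : σ.M ≤ (σ.rd w u).M := le_sup_left

theorem Win.succ : ∀ {k : ℕ} {σ : St n}, Win k σ → Win (k + 1) σ
  | 0, _, h => Or.inl h
  | _ + 1, _, Or.inl h => Or.inl h
  | _ + 1, _, Or.inr h => Or.inr fun w hw => by
      obtain ⟨u, hu, h'⟩ := h w hw
      exact ⟨u, hu, h'.succ⟩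

theorem Win.mono {k l : ℕ} {σ : St n} (h : Win k σ) (hkl : k ≤ l) : Win l σ := by
  induction hkl with
  | refl => exact h
  | step _ ih => exact ih.succ

theorem Win.step {k : ℕ} {σ : St n}
    (h : ∀ w, σ.Br w → ∃ u, σ.Mk w u ∧ Win k (σ.rd w u)) : Win (k + 1) σ := Or.inr h

end St

end Game

/-! ### Spanning paths and cycles outside a small set -/

section Paths

variable {n : ℕ}

/-- `G` has a path from `p` to `s` whose vertices are exactly those outside `X`. -/
def HPc (G : SimpleGraph (Fin n)) (X : Finset (Fin n)) (p s : Fin n) : Prop :=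
  ∃ w : G.Walk p s, w.IsPath ∧ ∀ x, x ∈ w.support ↔ x ∉ X

/-- `G` has a cycle through exactly the vertices outside `R`, one of them being `c`: a path
from `c` to a neighbour of `c`. -/
def Cyc (G : SimpleGraph (Fin n)) (R : Finset (Fin n)) (c : Fin n) : Prop :=
  ∃ d, HPc G R c d ∧ G.Adj c d

variable {G G' : SimpleGraph (Fin n)} {X R : Finset (Fin n)} {p s u c : Fin n}

theorem HPc.mono (h : HPc G X p s) (hG : G ≤ G') : HPc G' X p s := by
  obtain ⟨w, hw, hs⟩ := h
  refine ⟨w.mapLe hG, (SimpleGraph.Walk.isPath_mapLe hG).2 hw, fun x => ?_⟩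
  rw [SimpleGraph.Walk.support_mapLe_eq_support]; exact hs x

theorem HPc.symm (h : HPc G X p s) : HPc G X s p := by
  obtain ⟨w, hw, hs⟩ := h
  exact ⟨w.reverse, hw.reverse, fun x => by simpa using hs x⟩

theorem HPc.notMem_left (h : HPc G X p s) : p ∉ X := by
  obtain ⟨w, hw, hs⟩ := h
  exact (hs p).1 w.start_mem_support

theorem HPc.notMem_right (h : HPc G X p s) : s ∉ X := h.symm.notMem_left

/-- Prolonging a path by a new starting vertex `u`. -/
theorem HPc.cons (h : HPc G X p s) (hu : u ∈ X) (ha : G.Adj u p) : HPc G (X.erase u) u s := by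
  obtain ⟨w, hw, hs⟩ := h
  refine ⟨SimpleGraph.Walk.cons ha w, ?_, fun x => ?_⟩
  · rw [SimpleGraph.Walk.cons_isPath_iff]
    exact ⟨hw, fun h => (hs u).1 h hu⟩
  · rw [SimpleGraph.Walk.support_cons, List.mem_cons, hs, Finset.mem_erase]
    tauto

theorem HPc.length (w : G.Walk p s) (hw : w.IsPath) (hs : ∀ x, x ∈ w.support ↔ x ∉ X) :
    w.length + 1 + X.card = n := by
  have h1 : w.support.toFinset = Xᶜ := by ext x; simp [hs]
  have h2 := List.toFinset_card_of_nodup hw.support_nodup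
  rw [h1, Finset.card_compl, SimpleGraph.Walk.length_support, Fintype.card_fin] at h2
  have := Finset.card_le_univ X
  simp only [Fintype.card_fin] at this
  omega

theorem HPc.ne (h : HPc G X p s) (hX : X.card + 2 ≤ n) : p ≠ s := by
  rintro rfl
  obtain ⟨w, hw, hs⟩ := h
  have := HPc.length w hw hs
  have hl := SimpleGraph.Walk.length_eq_zero_iff.2 (SimpleGraph.Walk.isPath_iff_nil.1 hw)
  omega

/-- Cutting the cycle formed by a path `w` from `p` to `s` and an edge `ps` at the edge
between the `i`-th and the `i+1`-st vertex of `w`. -/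
theorem HPc.rot (w : G.Walk p s) (hw : w.IsPath) (hs : ∀ x, x ∈ w.support ↔ x ∉ X)
    (ha : G.Adj s p) {i : ℕ} (hi : i < w.length) :
    HPc G X (w.getVert (i + 1)) (w.getVert i) := by
  let q : G.Walk (w.getVert (i + 1)) (w.getVert i) :=
    (w.drop (i + 1)).append (SimpleGraph.Walk.cons ha (w.take i))
  have hperm : q.support.Perm w.support := by
    simp only [q, SimpleGraph.Walk.support_append, SimpleGraph.Walk.support_cons, List.tail_cons,
      SimpleGraph.Walk.support_take, SimpleGraph.Walk.drop_support_eq_support_drop_min]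
    rw [min_eq_left (by omega)]
    refine List.perm_append_comm.trans ?_
    rw [List.take_append_drop]
  refine ⟨q, ?_, fun x => ?_⟩
  · rw [SimpleGraph.Walk.isPath_def]
    exact hperm.nodup_iff.2 hw.support_nodup
  · rw [hperm.mem_iff]; exact hs x

theorem Cyc.mono (h : Cyc G R c) (hG : G ≤ G') : Cyc G' R c := by
  obtain ⟨d, h1, h2⟩ := h
  exact ⟨d, h1.mono hG, hG h2⟩

theorem Cyc.isHamiltonian (h : Cyc G ∅ c) (hn : 3 ≤ n) : G.IsHamiltonian := by
  obtain ⟨d, ⟨w, hw, hs⟩, ha⟩ := h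
  intro _
  have hl := HPc.length w hw hs
  refine ⟨d, SimpleGraph.Walk.cons ha.symm w, ?_⟩
  have hc : (SimpleGraph.Walk.cons ha.symm w).IsCycle := by
    rw [SimpleGraph.Walk.cons_isCycle_iff]
    refine ⟨hw, fun he => ?_⟩
    rw [Sym2.eq_swap] at he
    have := hw.length_eq_one_of_mem_edges he
    simp only [Finset.card_empty] at hl
    omega
  refine ⟨hc, ?_⟩
  intro x
  rw [SimpleGraph.Walk.support_tail_of_not_nil _ SimpleGraph.Walk.not_nil_cons,
    SimpleGraph.Walk.support_cons, List.tail_cons]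
  exact hw.isHamiltonian_of_mem (fun x => (hs x).2 (Finset.notMem_empty x)) x

end Paths

/-! ### Degrees in WBreaker's graph -/

section Degrees

variable {n : ℕ}

/-- The neighbourhood of `x` in WBreaker's graph. -/
noncomputable def nb (B : SimpleGraph (Fin n)) (x : Fin n) : Finset (Fin n) :=
  Finset.univ.filter (B.Adj x)

@[simp] theorem mem_nb {B : SimpleGraph (Fin n)} {x y : Fin n} : y ∈ nb B x ↔ B.Adj x y := by
  simp [nb]

theorem nb_bb_le (σ : St n) (w x : Fin n) : (nb (σ.bb w) x).card ≤ (nb σ.B x).card + 1 := by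
  refine (Finset.card_le_card (t := insert (if x = σ.v then w else σ.v) (nb σ.B x)) ?_).trans
    (Finset.card_insert_le _ _)
  intro y
  simp only [mem_nb, Finset.mem_insert, St.bb_adj]
  grind

theorem nb_bb_eq (σ : St n) {w x : Fin n} (h : (x ≠ σ.v ∧ x ≠ w) ∨ (x = w ∧ σ.B.Adj σ.v w)) :
    nb (σ.bb w) x = nb σ.B x := by
  ext y
  simp only [mem_nb, St.bb_adj]
  grind [SimpleGraph.Adj.symm]

/-- Facts that hold at every position after `t` rounds: the two graphs are edge-disjoint, and
no vertex has WBreaker-degree much above `2 * t / 3`. The latter holds because WBreaker, after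
walking through a vertex `x`, needs at least three moves to claim two further edges at `x`;
the last summand accounts for the stage of this cycle that he has reached. -/
structure Base (σ : St n) (t : ℕ) : Prop where
  disj : ∀ x y, σ.M.Adj x y → ¬ σ.B.Adj x y
  deg : ∀ x, 3 * (nb σ.B x).card ≤
    2 * t + (if σ.v = x then 1 else if σ.B.Adj σ.v x then 2 else 0)

theorem Base.step {σ : St n} {t : ℕ} (h : Base σ t) {w u : Fin n} (hw : σ.Br w)
    (hu : σ.Mk w u) : Base (σ.rd w u) (t + 1) := by
  obtain ⟨hw1, hw2⟩ := hw
  obtain ⟨hu1, hu2⟩ := hu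
  refine ⟨fun x y hM hB => ?_, fun x => ?_⟩
  · rw [St.rd_M_adj] at hM
    rw [St.rd_B] at hB
    rcases hM with hM | ⟨⟨rfl, rfl⟩ | ⟨rfl, rfl⟩, _⟩
    · rw [St.bb_adj] at hB
      rcases hB with hB | ⟨⟨rfl, rfl⟩ | ⟨rfl, rfl⟩, _⟩
      · exact h.disj x y hM hB
      · exact hw2 hM
      · exact hw2 hM.symm
    · exact hu2 hB
    · exact hu2 hB.symm
  · have hd := h.deg x
    have h1 := nb_bb_le σ w x
    rw [St.rd_B, St.rd_v]
    by_cases hxw : x = w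
    · subst hxw
      rw [if_pos rfl]
      by_cases hB : σ.B.Adj σ.v x
      · rw [nb_bb_eq σ (Or.inr ⟨rfl, hB⟩)]
        split_ifs at hd <;> omega
      · rw [if_neg (Ne.symm hw1), if_neg hB] at hd
        omega
    · rw [if_neg (Ne.symm hxw)]
      by_cases hxv : x = σ.v
      · subst hxv
        rw [if_pos rfl] at hd
        rw [if_pos ((St.bb_adj _ _ _ _).2 (Or.inr ⟨Or.inr ⟨rfl, rfl⟩, hw1⟩))]
        omega
      · rw [nb_bb_eq σ (Or.inl ⟨hxv, hxw⟩)]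
        split_ifs at hd ⊢ <;> omega

theorem Base.deg_le {σ : St n} {t : ℕ} (h : Base σ t) (x : Fin n) :
    3 * (nb σ.B x).card ≤ 2 * t + 2 := by
  have := h.deg x
  split_ifs at this <;> omega

end Degrees

/-! ### Absorbing the last vertices into the cycle -/

section Absorb

variable {n : ℕ}

/-- WMaker's position is an end of two spanning paths (outside `R`) with different other ends
`z₁` and `z₂`. WBreaker can block only one of the two closing edges, and the other one
yields a cycle. -/
theorem exit_cyc {σ : St n} {R : Finset (Fin n)} {z₁ z₂ : Fin n}
    (h₁ : HPc σ.M R σ.p z₁) (h₂ : HPc σ.M R σ.p z₂) (hz : z₁ ≠ z₂)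
    (hp₁ : σ.p ≠ z₁) (hp₂ : σ.p ≠ z₂) (hB₁ : ¬ σ.B.Adj σ.p z₁) (hB₂ : ¬ σ.B.Adj σ.p z₂)
    (w : Fin n) :
    ∃ u, σ.Mk w u ∧ Cyc (σ.rd w u).M R u := by
  have key : ∀ z, HPc σ.M R σ.p z → σ.p ≠ z → Cyc (σ.rd w z).M R z := fun z h hp =>
    ⟨σ.p, h.symm.mono (St.M_le_rd _ _ _), (St.rd_M_adj _ _ _ _ _).2 (by grind)⟩
  by_cases hb : (σ.bb w).Adj σ.p z₁
  · refine ⟨z₂, ⟨hp₂.symm, fun h => ?_⟩, key _ h₂ hp₂⟩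
    rw [St.bb_adj] at hb h
    grind
  · exact ⟨z₁, ⟨hp₁.symm, hb⟩, key _ h₁ hp₁⟩

theorem card_filter_shift (f : ℕ → Fin n) (L j : ℕ) (hf : Set.InjOn f {i | i ≤ L})
    (hj : j ≤ 2) (A : Finset (Fin n)) :
    ((Finset.range (L - 1)).filter (fun i => f (i + j) ∈ A)).card ≤ A.card := by
  refine Finset.card_le_card_of_injOn (fun i => f (i + j)) (fun i hi => ?_) ?_
  · simpa using (Finset.mem_filter.1 hi).2
  · intro i hi i' hi' he
    have h1 := (Finset.mem_filter.1 hi).1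
    have h2 := (Finset.mem_filter.1 hi').1
    rw [Finset.mem_range] at h1 h2
    have := hf (x₁ := i + j) (x₂ := i' + j) (by simp; omega) (by simp; omega) he
    omega

/-- On a long cycle there is a vertex `x` outside `A₀`, with neighbours `z₁`, `z₂` along the
cycle, such that none of the three lies in `A₁`; the cycle minus either edge at `x` is a path
starting in `x`. -/
theorem Cyc.exists_triple {G : SimpleGraph (Fin n)} {R : Finset (Fin n)} {c : Fin n}
    (h : Cyc G R c) (A₀ A₁ : Finset (Fin n)) (hA : A₀.card + 3 * A₁.card + R.card + 2 < n) :
    ∃ x z₁ z₂, HPc G R x z₁ ∧ HPc G R x z₂ ∧ z₁ ≠ z₂ ∧ x ≠ z₁ ∧ x ≠ z₂ ∧ x ≠ c ∧ x ∉ A₀ ∧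
      x ∉ A₁ ∧ z₁ ∉ A₁ ∧ z₂ ∉ A₁ := by
  obtain ⟨d, ⟨w, hw, hs⟩, ha⟩ := h
  have hl := HPc.length w hw hs
  have hinj := hw.getVert_injOn
  set f := w.getVert with hf
  set L := w.length with hL
  have c0 := card_filter_shift f L 1 hinj (by omega) A₀
  have c1 := card_filter_shift f L 0 hinj (by omega) A₁
  have c2 := card_filter_shift f L 1 hinj (by omega) A₁
  have c3 := card_filter_shift f L 2 hinj (by omega) A₁
  obtain ⟨i, hi, hi'⟩ : ∃ i ∈ Finset.range (L - 1), i ∉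
      ((Finset.range (L - 1)).filter (fun i => f (i + 1) ∈ A₀) ∪
      (Finset.range (L - 1)).filter (fun i => f (i + 0) ∈ A₁)) ∪
      ((Finset.range (L - 1)).filter (fun i => f (i + 1) ∈ A₁) ∪
      (Finset.range (L - 1)).filter (fun i => f (i + 2) ∈ A₁)) := by
    apply Finset.exists_mem_notMem_of_card_lt_card
    rw [Finset.card_range]
    refine lt_of_le_of_lt ((Finset.card_union_le _ _).trans (add_le_add
      (Finset.card_union_le _ _) (Finset.card_union_le _ _))) ?_
    omega
  simp only [Finset.mem_union, Finset.mem_filter, hi, true_and, not_or] at hi'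
  rw [Finset.mem_range] at hi
  have hne : ∀ j k, j ≤ L → k ≤ L → j ≠ k → f j ≠ f k := fun j k hj hk hjk he =>
    hjk (hinj (by simpa using hj) (by simpa using hk) he)
  refine ⟨f (i + 1), f i, f (i + 2), HPc.rot w hw hs ha.symm (by omega),
    (HPc.rot w hw hs ha.symm (by omega)).symm, hne _ _ (by omega) (by omega) (by omega),
    hne _ _ (by omega) (by omega) (by omega), hne _ _ (by omega) (by omega) (by omega), ?_,
    hi'.1.1, hi'.2.1, by simpa using hi'.1.2, hi'.2.2⟩
  rw [show c = f 0 by simp [hf]]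
  exact hne _ _ (by omega) (by omega) (by omega)

/-- Three moves absorb a vertex `a` at which WBreaker does not stand: jump along a chord to a
cycle vertex `x`, go to `a`, and return to one of the two cycle neighbours of `x`. -/
theorem absorb {σ : St n} {R : Finset (Fin n)} {t d k : ℕ} {a w : Fin n}
    (hb : Base σ t) (hc : Cyc σ.M R σ.p) (haR : a ∈ R) (hw : σ.Br w) (haw : a ≠ w)
    (hd : ∀ x ∈ R, (nb σ.B x).card ≤ d) (hR : R.card ≤ 2)
    (hn : 2 * t + 9 * d + 40 < 3 * n)
    (hk : ∀ σ' : St n, Base σ' (t + 3) → Cyc σ'.M (R.erase a) σ'.p →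
      (∀ x ∈ R, (nb σ'.B x).card ≤ d + 3) → St.Win k σ') :
    ∃ u, σ.Mk w u ∧ St.Win (k + 2) (σ.rd w u) := by
  have hdp := hb.deg_le σ.p
  have h1 := nb_bb_le σ w σ.p
  have h2 := nb_bb_le σ w a
  have h3 := hd a haR
  have h4 := Finset.card_insert_le w (nb (σ.bb w) a)
  obtain ⟨x, z₁, z₂, hx₁, hx₂, hz, hxz₁, hxz₂, hxc, hx0, hx1, hz₁, hz₂⟩ :=
    hc.exists_triple (nb (σ.bb w) σ.p) (insert w (nb (σ.bb w) a)) (by omega)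
  simp only [mem_nb, Finset.mem_insert, not_or] at hx0 hx1 hz₁ hz₂
  have hmk : σ.Mk w x := ⟨hxc, hx0⟩
  have hb1 := hb.step hw hmk
  refine ⟨x, hmk, St.Win.step fun w2 hw2 => ?_⟩
  have hxR := hx₁.notMem_left
  have hz1R := hx₁.notMem_right
  have hz2R := hx₂.notMem_right
  have hax : a ≠ x := fun h => hxR (h ▸ haR)
  have haz₁ : a ≠ z₁ := fun h => hz1R (h ▸ haR)
  have haz₂ : a ≠ z₂ := fun h => hz2R (h ▸ haR)
  have hmk2 : (σ.rd w x).Mk w2 a := by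
    refine ⟨hax, fun h => ?_⟩
    rw [St.bb_adj] at h
    simp only [St.rd_p, St.rd_B, St.rd_v] at h
    have := hx1.2
    rw [SimpleGraph.adj_comm] at this
    grind
  have hb2 := hb1.step hw2 hmk2
  refine ⟨a, hmk2, St.Win.step fun w3 hw3 => ?_⟩
  have hadj : ((σ.rd w x).rd w2 a).M.Adj a x := by
    rw [St.rd_M_adj]; simp [hax]
  have hle : σ.M ≤ ((σ.rd w x).rd w2 a).M := (St.M_le_rd _ _ _).trans (St.M_le_rd _ _ _)
  have hnb : ∀ z, z ≠ w → a ≠ z → ¬ (σ.bb w).Adj a z →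
      ¬ ((σ.rd w x).rd w2 a).B.Adj a z := fun z hz1 hz2 hz3 h => by
    rw [St.rd_B, St.bb_adj] at h
    simp only [St.rd_B, St.rd_v] at h
    grind
  obtain ⟨u, hu, hcu⟩ := exit_cyc (σ := (σ.rd w x).rd w2 a) (R := R.erase a)
    ((hx₁.mono hle).cons haR hadj) ((hx₂.mono hle).cons haR hadj) hz haz₁ haz₂
    (hnb _ hz₁.1 haz₁ hz₁.2) (hnb _ hz₂.1 haz₂ hz₂.2) w3
  refine ⟨u, hu, hk _ (hb2.step hw3 hu) hcu fun y hy => ?_⟩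
  have e1 := nb_bb_le σ w y
  have e2 := nb_bb_le (σ.rd w x) w2 y
  have e3 := nb_bb_le ((σ.rd w x).rd w2 a) w3 y
  have := hd y hy
  simp only [St.rd_B] at e1 e2 e3 ⊢
  omega

/-- The last vertex off the cycle costs at most four moves. -/
theorem absorb_one {σ : St n} {t d : ℕ} {a : Fin n}
    (hb : Base σ t) (hc : Cyc σ.M {a} σ.p) (hd : (nb σ.B a).card ≤ d) (hn3 : 3 ≤ n)
    (hn : 2 * t + 9 * d + 80 < 3 * n) : St.Win 4 σ := by
  have fin : ∀ σ' : St n, Cyc σ'.M (({a} : Finset (Fin n)).erase a) σ'.p → St.Win 0 σ' :=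
    fun σ' h => Cyc.isHamiltonian (c := σ'.p) (by simpa using h) hn3
  refine St.Win.step fun w hw => ?_
  by_cases haw : a = w
  · -- WBreaker has just stepped on `a`; a step along the cycle forces him to leave it.
    obtain ⟨e, he, hce⟩ := hc
    have hmk : σ.Mk w e := by
      refine ⟨hce.ne', fun h => ?_⟩
      rw [St.bb_adj] at h
      rcases h with h | ⟨⟨h1, h2⟩ | ⟨h1, h2⟩, -⟩
      · exact hb.disj _ _ hce h
      · have := he.notMem_right
        simp [haw, h2] at this
      · have := he.notMem_left
        simp [haw, h1] at this
    refine ⟨e, hmk, St.Win.step fun w2 hw2 => ?_⟩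
    have h1 := nb_bb_le σ w a
    refine absorb (R := {a}) (a := a) (d := d + 1) (k := 0) (hb.step hw hmk)
      ⟨σ.p, he.symm.mono (St.M_le_rd _ _ _), St.M_le_rd _ _ _ hce.symm⟩ (by simp) hw2 ?_ ?_
      (by simp) (by omega) fun σ' _ h _ => fin σ' h
    · rw [haw]; exact hw2.1.symm
    · intro x hx
      rw [Finset.mem_singleton.1 hx, St.rd_B]
      omega
  · obtain ⟨u, hu, hu'⟩ := absorb (d := d) (k := 0) hb hc (Finset.mem_singleton_self a) hw haw
      (fun x hx => by rw [Finset.mem_singleton.1 hx]; exact hd) (by simp) (by omega)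
      fun σ' _ h _ => fin σ' h
    exact ⟨u, hu, hu'.succ⟩

/-- Of two vertices off the cycle, WMaker first absorbs one at which WBreaker does not stand. -/
theorem absorb_two {σ : St n} {t d : ℕ} {a b : Fin n} (hab : a ≠ b)
    (hb : Base σ t) (hc : Cyc σ.M {a, b} σ.p) (hd : ∀ x ∈ ({a, b} : Finset (Fin n)),
      (nb σ.B x).card ≤ d) (hn3 : 3 ≤ n)
    (hn : 2 * t + 9 * d + 140 < 3 * n) : St.Win 7 σ := by
  refine St.Win.step fun w hw => ?_
  by_cases haw : a = w
  · refine absorb (a := b) (k := 4) hb hc (by simp) hw (haw ▸ hab.symm) hd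
      (Finset.card_le_two) (by omega) fun σ' h1 h2 h3 => ?_
    refine absorb_one (a := a) h1 ?_ (h3 a (by simp)) hn3 (by omega)
    convert h2 using 1
    ext x; simp; grind
  · refine absorb (a := a) (k := 4) hb hc (by simp) hw haw hd
      (Finset.card_le_two) (by omega) fun σ' h1 h2 h3 => ?_
    refine absorb_one (a := b) h1 ?_ (h3 b (by simp)) hn3 (by omega)
    convert h2 using 1
    ext x; simp; grind

end Absorb

/-! ### The end of the path-building stage -/

section Build

variable {n : ℕ}

/-- The condition under which WMaker walks through the set `U` of vertices she wants to visit,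
controlling WBreaker's edges inside `U` and between `U` and a set `S` of vertices needed
later. WBreaker has no edge inside `U`, all his edges between `S` and `U` end in the small
set `H` of exceptions, and he has at most one edge from WMaker's position to `U`, which he has
then only just claimed by moving to that position. -/
structure Ctrl (σ : St n) (U S H : Finset (Fin n)) : Prop where
  pU : σ.p ∉ U
  pS : σ.p ∉ S
  disj : ∀ x ∈ S, x ∉ U
  ins : ∀ x ∈ U, ∀ y ∈ U, ¬ σ.B.Adj x y
  out : ∀ x ∈ U, x ∉ H → ∀ s ∈ S, ¬ σ.B.Adj s x
  cur : ∀ x ∈ U, σ.B.Adj σ.p x → σ.v = σ.p ∧ ∀ y ∈ U, σ.B.Adj σ.p y → y = x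

/-- The situation while WMaker closes up: `W` is the set she still walks through, `x` a vertex
left for later, and her graph has two spanning paths on the remaining vertices from her
position to `s₁` and to `s₂`. -/
structure PostS (σ : St n) (x : Fin n) (W : Finset (Fin n)) (s₁ s₂ : Fin n) : Prop where
  h₁ : HPc σ.M (insert x W) σ.p s₁
  h₂ : HPc σ.M (insert x W) σ.p s₂
  ne : s₁ ≠ s₂
  xW : x ∉ W
  time : ∃ t, Base σ t ∧ t + W.card + 1 = n
  light : ∀ y ∈ insert x W, (nb σ.B y).card + W.card ≤ 100

theorem PostS.step {σ : St n} {x : Fin n} {W : Finset (Fin n)} {s₁ s₂ w u : Fin n}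
    (h : PostS σ x W s₁ s₂) (hw : σ.Br w) (hu : u ∈ W) (hf : ¬ (σ.bb w).Adj σ.p u) :
    σ.Mk w u ∧ PostS (σ.rd w u) x (W.erase u) s₁ s₂ := by
  have hup : u ≠ σ.p := fun e => h.h₁.notMem_left (e ▸ Finset.mem_insert_of_mem hu)
  have hmk : σ.Mk w u := ⟨hup, hf⟩
  have hx : u ≠ x := fun e => h.xW (e ▸ hu)
  have hadj : (σ.rd w u).M.Adj u σ.p := by rw [St.rd_M_adj]; simp [hup]
  have he : (insert x W).erase u = insert x (W.erase u) :=
    Finset.erase_insert_of_ne hx.symm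
  have hc := Finset.card_erase_add_one hu
  obtain ⟨t, hb, ht⟩ := h.time
  refine ⟨hmk, ⟨?_, ?_, h.ne, fun hh => h.xW (Finset.mem_of_mem_erase hh),
    ⟨t + 1, hb.step hw hmk, by omega⟩, fun y hy => ?_⟩⟩
  · rw [← he]
    exact (h.h₁.mono (St.M_le_rd _ _ _)).cons (Finset.mem_insert_of_mem hu) hadj
  · rw [← he]
    exact (h.h₂.mono (St.M_le_rd _ _ _)).cons (Finset.mem_insert_of_mem hu) hadj
  · have h1 := h.light y (by rw [← he] at hy; exact Finset.mem_of_mem_erase hy)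
    have h2 := nb_bb_le σ w y
    rw [St.rd_B]
    omega

variable {σ : St n} {x : Fin n} {W : Finset (Fin n)} {s₁ s₂ : Fin n}

/-- One of the two closing edges is free; the vertices `x` and `b` remain to be absorbed. -/
theorem win_one (hn : 2000 ≤ n) (h : PostS σ x W s₁ s₂) (hW : W.card = 1)
    (hB₁ : ¬ σ.B.Adj σ.p s₁) (hB₂ : ¬ σ.B.Adj σ.p s₂) : St.Win 8 σ := by
  obtain ⟨b, rfl⟩ := Finset.card_eq_one.1 hW
  have hX : (insert x ({b} : Finset (Fin n))).card + 2 ≤ n := by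
    have := Finset.card_insert_le x ({b} : Finset (Fin n)); omega
  refine St.Win.step fun w hw => ?_
  obtain ⟨u, hu, hc⟩ := exit_cyc h.h₁ h.h₂ h.ne (h.h₁.ne hX) (h.h₂.ne hX) hB₁ hB₂ w
  obtain ⟨t, hb, ht⟩ := h.time
  refine ⟨u, hu, absorb_two (d := 101) (fun e => h.xW (by simp [e])) (hb.step hw hu) hc
    (fun y hy => ?_) (by omega) (by omega)⟩
  have := h.light y hy
  have := nb_bb_le σ w y
  rw [St.rd_B]; omega

/-- WMaker visits the vertex of `W` touched by WBreaker's new edge, if any. -/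
theorem win_two (hn : 2000 ≤ n) (h : PostS σ x W s₁ s₂) (hW : W.card = 2)
    (hp : ∀ y ∈ W, ¬ σ.B.Adj σ.p y) (h₁ : ∀ y ∈ W, ¬ σ.B.Adj s₁ y)
    (h₂ : ∀ y ∈ W, ¬ σ.B.Adj s₂ y) : St.Win 9 σ := by
  refine St.Win.step fun w hw => ?_
  have hpW : σ.p ∉ W := fun e => h.h₁.notMem_left (Finset.mem_insert_of_mem e)
  have hs1 : s₁ ∉ W := fun e => h.h₁.notMem_right (Finset.mem_insert_of_mem e)
  have hs2 : s₂ ∉ W := fun e => h.h₂.notMem_right (Finset.mem_insert_of_mem e)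
  -- WBreaker's new edge misses a vertex of `W` or consists of both of them.
  obtain ⟨u, hu, hfree⟩ : ∃ u ∈ W, ∀ z, z ∉ W → (σ.bb w).Adj z u → σ.B.Adj z u := by
    obtain ⟨y, z, hyz, rfl⟩ := Finset.card_eq_two.1 hW
    simp only [Finset.mem_insert, Finset.mem_singleton, exists_eq_or_imp, exists_eq_left,
      St.bb_adj]
    grind
  obtain ⟨hmk, hst⟩ := h.step hw hu fun hh => hp u hu (hfree _ hpW hh)
  refine ⟨u, hmk, win_one hn hst (by rw [Finset.card_erase_of_mem hu, hW]) ?_ ?_⟩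
  · exact fun hh => h₁ u hu (hfree _ hs1 hh.symm)
  · exact fun hh => h₂ u hu (hfree _ hs2 hh.symm)

/-- WMaker can always step to a vertex of `U` outside a small set `A`. -/
theorem Ctrl.exists_free {U S H : Finset (Fin n)} (h : Ctrl σ U S H) (A : Finset (Fin n))
    (hA : A.card + 3 ≤ U.card) (w : Fin n) :
    ∃ u ∈ U, u ∉ A ∧ u ≠ w ∧ ¬ (σ.bb w).Adj σ.p u := by
  obtain ⟨z, hz⟩ : ∃ z, ∀ y ∈ U, σ.B.Adj σ.p y → y = z ∧ σ.v = σ.p := by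
    by_cases he : ∃ z ∈ U, σ.B.Adj σ.p z
    · obtain ⟨z, hz, hpz⟩ := he
      exact ⟨z, fun y hy hpy => ⟨(h.cur z hz hpz).2 y hy hpy, (h.cur z hz hpz).1⟩⟩
    · exact ⟨w, fun y hy hpy => (he ⟨y, hy, hpy⟩).elim⟩
  -- If `z` is blocked then WBreaker stands at `p`, so his position need not be avoided.
  obtain ⟨u, hu, huA⟩ := Finset.exists_mem_notMem_of_card_lt_card
    (s := insert w (insert (if σ.v = σ.p then z else σ.v) A)) (t := U) (by
      have := Finset.card_insert_le w (insert (if σ.v = σ.p then z else σ.v) A)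
      have := Finset.card_insert_le (if σ.v = σ.p then z else σ.v) A
      omega)
  refine ⟨u, hu, by grind, by grind, fun hb => ?_⟩
  rw [St.bb_adj] at hb
  have := h.pU
  grind

/-- The move rule that preserves the invariant: if WBreaker has just claimed an edge inside `U`,
WMaker goes to the end at which he stands, and if he has claimed an edge between `S` and
`U \ H`, she goes to its end in `U`. -/
theorem Ctrl.step {U S H : Finset (Fin n)} (h : Ctrl σ U S H) {w u : Fin n} (hu : u ∈ U)
    (h1 : σ.v ∈ U → w ∈ U → u = w) (h2 : σ.v ∈ U → σ.v ∉ H → w ∈ S → u = σ.v)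
    (h3 : σ.v ∈ S → w ∈ U → w ∉ H → u = w) :
    Ctrl (σ.rd w u) (U.erase u) S (H.erase u) := by
  obtain ⟨a1, a2, a3, a4, a5, a6⟩ := h
  refine ⟨by simp, fun hh => a3 _ hh hu, fun s hs => ?_, ?_, ?_, ?_⟩
  · have := a3 s hs; grind
  · intro x hx y hy
    rw [St.rd_B, St.bb_adj]
    have := a4 x (Finset.mem_of_mem_erase hx) y (Finset.mem_of_mem_erase hy)
    grind
  · intro x hx hxH s hs
    rw [St.rd_B, St.bb_adj]
    have := a5 x (Finset.mem_of_mem_erase hx)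
    grind
  · intro x hx
    simp only [St.rd_B, St.bb_adj, St.rd_p, St.rd_v]
    have := a4 u hu
    grind

/-- Under the invariant, the vertex prescribed by the move rule is not blocked. -/
theorem Ctrl.free {U S H : Finset (Fin n)} (h : Ctrl σ U S H) {w u : Fin n}
    (hu : u ∈ U) (hv : σ.v ∈ U ∨ σ.v ∈ S) (hw' : w ∈ U ∨ w ∈ S) :
    ¬ (σ.bb w).Adj σ.p u := by
  obtain ⟨a1, a2, a3, a4, a5, a6⟩ := h
  rw [St.bb_adj]
  have := a6 u hu
  grind

theorem win_three (hn : 2000 ≤ n) (h : PostS σ x W s₁ s₂) (hW : W.card = 3)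
    (hI : Ctrl σ W {s₁, s₂} ∅) : St.Win 10 σ := by
  refine St.Win.step fun w hw => ?_
  -- It suffices to leave two vertices that WBreaker has not joined to the other relevant ones.
  have fin : ∀ u ∈ W, ¬ (σ.bb w).Adj σ.p u → (∀ y ∈ W.erase u, ¬ (σ.bb w).Adj u y) →
      (∀ y ∈ W.erase u, ∀ s ∈ ({s₁, s₂} : Finset (Fin n)), ¬ (σ.bb w).Adj s y) →
      ∃ u, σ.Mk w u ∧ St.Win 9 (σ.rd w u) := fun u hu h1 h2 h3 => by
    obtain ⟨hmk, hst⟩ := h.step hw hu h1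
    exact ⟨u, hmk, win_two hn hst (by rw [Finset.card_erase_of_mem hu, hW]) h2
      (fun y hy => h3 y hy s₁ (by simp)) (fun y hy => h3 y hy s₂ (by simp))⟩
  by_cases hvw : σ.v ∈ W ∧ w ∈ W
  · obtain ⟨u, hu, huv⟩ := Finset.exists_mem_notMem_of_card_lt_card
      (s := {σ.v, w}) (t := W) (by have := Finset.card_le_two (a := σ.v) (b := w); omega)
    refine fin u hu (hI.free hu (Or.inl hvw.1) (Or.inl hvw.2)) (fun y hy => ?_)
      (fun y hy s hs => ?_)
    · have := hI.ins u hu y (Finset.mem_of_mem_erase hy)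
      rw [St.bb_adj]; grind
    · have := hI.out y (Finset.mem_of_mem_erase hy) (by simp) s hs
      have := hI.disj s hs
      rw [St.bb_adj]; grind
  · -- The end of the new edge in `W`, if the edge joins `W` to `s₁` or `s₂`; else anything.
    obtain ⟨u, hu, hf, hs⟩ : ∃ u ∈ W, ¬ (σ.bb w).Adj σ.p u ∧
        ∀ y ∈ W.erase u, ∀ s ∈ ({s₁, s₂} : Finset (Fin n)), ¬ (σ.bb w).Adj s y := by
      have ho := hI.out
      have hd := hI.disj
      by_cases h1 : σ.v ∈ W ∧ w ∈ ({s₁, s₂} : Finset (Fin n))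
      · refine ⟨σ.v, h1.1, hI.free h1.1 (Or.inl h1.1) (Or.inr h1.2), fun y hy s hs => ?_⟩
        have := ho y (Finset.mem_of_mem_erase hy) (by simp) s hs
        rw [St.bb_adj]; grind
      by_cases h2 : w ∈ W ∧ σ.v ∈ ({s₁, s₂} : Finset (Fin n))
      · refine ⟨w, h2.1, hI.free h2.1 (Or.inr h2.2) (Or.inl h2.1), fun y hy s hs => ?_⟩
        have := ho y (Finset.mem_of_mem_erase hy) (by simp) s hs
        rw [St.bb_adj]; grind
      obtain ⟨u, hu, -, -, hf⟩ := hI.exists_free ∅ (by simp [hW]) w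
      refine ⟨u, hu, hf, fun y hy s hs => ?_⟩
      have := ho y (Finset.mem_of_mem_erase hy) (by simp) s hs
      rw [St.bb_adj]; grind
    refine fin u hu hf (fun y hy => ?_) hs
    have := hI.ins u hu y (Finset.mem_of_mem_erase hy)
    rw [St.bb_adj]; grind

/-- The choice between the vertices prescribed by the move rule; outside of its scope, a free
vertex is taken. -/
theorem Ctrl.exists_step {U S : Finset (Fin n)} (h : Ctrl σ U S ∅) (hU : 3 ≤ U.card)
    (w : Fin n) : ∃ u ∈ U, ¬ (σ.bb w).Adj σ.p u ∧
      Ctrl (σ.rd w u) (U.erase u) S ∅ := by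
  have hd := h.disj
  have st : ∀ u ∈ U, (σ.v ∈ U → w ∈ U → u = w) → (σ.v ∈ U → w ∈ S → u = σ.v) →
      (σ.v ∈ S → w ∈ U → u = w) → Ctrl (σ.rd w u) (U.erase u) S ∅ := fun u hu h1 h2 h3 => by
    have := h.step hu h1 (fun a _ => h2 a) (fun a b _ => h3 a b)
    rwa [Finset.erase_eq_of_notMem (Finset.notMem_empty u)] at this
  by_cases h1 : w ∈ U ∧ (σ.v ∈ U ∨ σ.v ∈ S)
  · exact ⟨w, h1.1, h.free h1.1 h1.2 (Or.inl h1.1), st w h1.1 (by grind) (by grind) (by grind)⟩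
  by_cases h2 : σ.v ∈ U ∧ w ∈ S
  · exact ⟨σ.v, h2.1, h.free h2.1 (Or.inl h2.1) (Or.inr h2.2),
      st σ.v h2.1 (by grind) (by grind) (by grind)⟩
  obtain ⟨u, hu, -, -, hf⟩ := h.exists_free ∅ (by simpa using hU) w
  exact ⟨u, hu, hf, st u hu (by grind) (by grind) (by grind)⟩

/-- WMaker walks through `W` under the invariant `Ctrl` with the two path ends `s₁`, `s₂` as `S`. -/
theorem win_post (hn : 2000 ≤ n) : ∀ (k : ℕ) (σ : St n) (W : Finset (Fin n)),
    PostS σ x W s₁ s₂ → Ctrl σ W {s₁, s₂} ∅ → W.card = k + 3 → St.Win (k + 10) σ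
  | 0, _, _, h, hI, hW => win_three hn h hW hI
  | k + 1, σ, W, h, hI, hW => by
    refine St.Win.step fun w hw => ?_
    obtain ⟨u, hu, hf, hI'⟩ := hI.exists_step (by omega) w
    obtain ⟨hmk, hst⟩ := h.step hw hu hf
    exact ⟨u, hmk, win_post hn k _ _ hst hI' (by rw [Finset.card_erase_of_mem hu]; omega)⟩

end Build

/-! ### Closing the path to a cycle -/

section Close

variable {n : ℕ}

/-- The situation while WMaker prolongs a path: `U` is the set of vertices she has not visited,
`p₀`, `p₁` are the first two vertices of her path, and WBreaker's degrees are small on `U`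
outside the set `H` of exceptions. -/
structure PreS (σ : St n) (U H : Finset (Fin n)) (p₀ p₁ : Fin n) : Prop where
  path : HPc σ.M (insert p₀ U) σ.p p₁
  adj : σ.M.Adj p₁ p₀
  p₀U : p₀ ∉ U
  time : ∃ t, Base σ t ∧ t + U.card + 1 = n
  light : ∀ y ∈ U, y ∉ H → (nb σ.B y).card + U.card ≤ 100

variable {σ : St n} {U H : Finset (Fin n)} {p₀ p₁ : Fin n}

theorem PreS.pU (h : PreS σ U H p₀ p₁) : σ.p ∉ U := fun e =>
  h.path.notMem_left (Finset.mem_insert_of_mem e)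

theorem PreS.p₁U (h : PreS σ U H p₀ p₁) : p₁ ∉ U := fun e =>
  h.path.notMem_right (Finset.mem_insert_of_mem e)

theorem PreS.p_ne (h : PreS σ U H p₀ p₁) : σ.p ≠ p₀ := fun e =>
  h.path.notMem_left (e ▸ Finset.mem_insert_self _ _)

theorem PreS.step (h : PreS σ U H p₀ p₁) {w u : Fin n} (hw : σ.Br w) (hu : u ∈ U)
    (hf : ¬ (σ.bb w).Adj σ.p u) :
    σ.Mk w u ∧ PreS (σ.rd w u) (U.erase u) (H.erase u) p₀ p₁ := by
  have hup : u ≠ σ.p := fun e => h.pU (e ▸ hu)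
  have hmk : σ.Mk w u := ⟨hup, hf⟩
  have hx : u ≠ p₀ := fun e => h.p₀U (e ▸ hu)
  have hadj : (σ.rd w u).M.Adj u σ.p := by rw [St.rd_M_adj]; simp [hup]
  have he : (insert p₀ U).erase u = insert p₀ (U.erase u) :=
    Finset.erase_insert_of_ne hx.symm
  have hc := Finset.card_erase_add_one hu
  obtain ⟨t, hb, ht⟩ := h.time
  refine ⟨hmk, ⟨?_, St.M_le_rd _ _ _ h.adj, fun hh => h.p₀U (Finset.mem_of_mem_erase hh),
    ⟨t + 1, hb.step hw hmk, by omega⟩, fun y hy hyH => ?_⟩⟩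
  · rw [← he]
    exact (h.path.mono (St.M_le_rd _ _ _)).cons (Finset.mem_insert_of_mem hu) hadj
  · have h1 := h.light y (Finset.mem_of_mem_erase hy)
      fun hh => hyH (Finset.mem_erase.2 ⟨Finset.ne_of_mem_erase hy, hh⟩)
    have h2 := nb_bb_le σ w y
    rw [St.rd_B]
    omega

theorem PreS.step' (h : PreS σ U ∅ p₀ p₁) {w u : Fin n} (hw : σ.Br w) (hu : u ∈ U)
    (hf : ¬ (σ.bb w).Adj σ.p u) :
    σ.Mk w u ∧ PreS (σ.rd w u) (U.erase u) ∅ p₀ p₁ := by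
  have := h.step hw hu hf
  rwa [Finset.erase_eq_of_notMem (Finset.notMem_empty u)] at this

/-- WMaker joins the end of her path to its first vertex `p₀`. Opening the cycle so obtained at
either of the two edges at `p₀` gives the two paths required in `PostS`. -/
theorem close (hn : 2000 ≤ n) (h : PreS σ U ∅ p₀ p₁) {w x : Fin n} (hw : σ.Br w) (hx : x ∈ U)
    (hU : 4 ≤ U.card) (h₀ : ¬ (σ.bb w).Adj σ.p p₀)
    (hi : ∀ y ∈ U.erase x, ∀ z ∈ U.erase x, ¬ (σ.bb w).Adj y z)
    (ho : ∀ y ∈ U.erase x, ¬ (σ.bb w).Adj σ.p y ∧ ¬ (σ.bb w).Adj p₀ y ∧ ¬ (σ.bb w).Adj p₁ y) :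
    ∃ u, σ.Mk w u ∧ St.Win (U.card + 6) (σ.rd w u) := by
  have hmk : σ.Mk w p₀ := ⟨h.p_ne.symm, h₀⟩
  obtain ⟨t, hb, ht⟩ := h.time
  have hU' : U.card ≤ 100 := (Nat.le_add_left _ _).trans (h.light x hx (Finset.notMem_empty x))
  have hc := Finset.card_erase_add_one hx
  have hne : σ.p ≠ p₁ := h.path.ne (by
    have := Finset.card_insert_le p₀ U; omega)
  have hpost : PostS (σ.rd w p₀) x (U.erase x) p₁ σ.p := by
    have he := Finset.erase_insert h.p₀U
    refine ⟨?_, ?_, hne.symm, Finset.notMem_erase _ _, ⟨t + 1, hb.step hw hmk, by omega⟩,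
      fun y hy => ?_⟩
    · rw [Finset.insert_erase hx]
      have := (h.path.mono (St.M_le_rd σ w p₀)).cons (u := p₀) (by simp)
        (by rw [St.rd_M_adj]; simp [h.p_ne.symm])
      rwa [he] at this
    · rw [Finset.insert_erase hx]
      have := (h.path.symm.mono (St.M_le_rd σ w p₀)).cons (u := p₀) (by simp)
        (St.M_le_rd _ _ _ h.adj.symm)
      rwa [he] at this
    · rw [Finset.insert_erase hx] at hy
      have := h.light y hy (by simp)
      have := nb_bb_le σ w y
      rw [St.rd_B]; omega
  have hctrl : Ctrl (σ.rd w p₀) (U.erase x) {p₁, σ.p} ∅ := by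
    have h1 := h.p₀U
    have h2 := h.p₁U
    have h3 := h.pU
    have h4 := h.adj.ne
    have h5 := h.p_ne
    refine ⟨by simp [h1], by simp [h4.symm, h5.symm], ?_, hi, ?_, ?_⟩
    · intro s hs; grind
    · intro y hy _ s hs
      have := ho y hy
      simp only [Finset.mem_insert, Finset.mem_singleton] at hs
      rcases hs with rfl | rfl
      exacts [this.2.2, this.1]
    · intro y hy hh
      exact absurd hh (ho y hy).2.1
  refine ⟨p₀, hmk, ?_⟩
  have := win_post hn (U.card - 4) _ _ hpost hctrl (by omega)
  rwa [show U.card - 4 + 10 = U.card + 6 by omega] at this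

/-- WMaker can close her path at once unless WBreaker moves from `p₀` to her position. -/
theorem fr_close (hn : 2000 ≤ n) (h : PreS σ U ∅ p₀ p₁) (hI : Ctrl σ U {p₀, p₁} ∅)
    (hU : 4 ≤ U.card) (hN : ∀ y ∈ U, ¬ σ.B.Adj σ.p y) (h₀ : ¬ σ.B.Adj σ.p p₀)
    (hv : σ.v ≠ σ.p) {w : Fin n} (hw : σ.Br w) (hvw : ¬ (σ.v = p₀ ∧ w = σ.p)) :
    ∃ u, σ.Mk w u ∧ St.Win (U.card + 6) (σ.rd w u) := by
  -- `x` is an end of the new edge if possible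
  obtain ⟨x, hx, hx1, hx2⟩ : ∃ x ∈ U, (w ∈ U → x = w) ∧ (w ∉ U → σ.v ∈ U → x = σ.v) := by
    by_cases h1 : w ∈ U
    · exact ⟨w, h1, by simp [h1]⟩
    by_cases h2 : σ.v ∈ U
    · exact ⟨σ.v, h2, by simp [h1]⟩
    obtain ⟨x, hx⟩ := Finset.card_pos.1 (by omega : 0 < U.card)
    exact ⟨x, hx, by simp [h1, h2]⟩
  have hpU := h.pU
  have hp0U := h.p₀U
  have hp1U := h.p₁U
  refine close hn h hw hx hU ?_ (fun y hy z hz => ?_) (fun y hy => ?_)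
  · rw [St.bb_adj]; grind
  · have := hI.ins y (Finset.mem_of_mem_erase hy) z (Finset.mem_of_mem_erase hz)
    rw [St.bb_adj]; grind
  · have h1 := hN y (Finset.mem_of_mem_erase hy)
    have h2 := hI.out y (Finset.mem_of_mem_erase hy) (by simp)
    have h3 := h2 p₀ (by simp)
    have h4 := h2 p₁ (by simp)
    simp only [St.bb_adj]
    grind

/-- If WBreaker does not stand at WMaker's position, then he can block the edge `p p₀` only by
leaving `p₀` towards `p`, and this he cannot repeat in the next round. -/
theorem win_fr (hn : 2000 ≤ n) (h : PreS σ U ∅ p₀ p₁) (hI : Ctrl σ U {p₀, p₁} ∅)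
    (hU : 5 ≤ U.card) (hN : ∀ y ∈ U, ¬ σ.B.Adj σ.p y) (h₀ : ¬ σ.B.Adj σ.p p₀)
    (hv : σ.v ≠ σ.p) : St.Win (U.card + 7) σ := by
  refine St.Win.step fun w hw => ?_
  by_cases hvw : σ.v = p₀ ∧ w = σ.p
  · obtain ⟨hv0, hwp⟩ := hvw
    obtain ⟨u, hu⟩ := Finset.card_pos.1 (by omega : 0 < U.card)
    have hpU := h.pU
    have hp0U := h.p₀U
    have hpp := h.p_ne
    have hf : ¬ (σ.bb w).Adj σ.p u := by
      have := hN u hu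
      rw [St.bb_adj]; grind
    obtain ⟨hmk, hst⟩ := h.step' hw hu hf
    have hst2 := hI.step hu (w := w) (by grind) (by grind) (by grind)
    rw [Finset.erase_eq_of_notMem (Finset.notMem_empty u)] at hst2
    have hc := Finset.card_erase_add_one hu
    refine ⟨u, hmk, ?_⟩
    rw [← hc]
    refine St.Win.step fun w2 hw2 => fr_close hn hst hst2 (by omega) ?_ ?_ ?_ hw2 ?_
    · intro y hy
      have := hI.ins u hu y (Finset.mem_of_mem_erase hy)
      simp only [St.rd_B, St.rd_p, St.bb_adj]
      grind
    · have := hI.out u hu (by simp) p₀ (by simp)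
      rw [SimpleGraph.adj_comm]
      simp only [St.rd_B, St.rd_p, St.bb_adj]
      grind
    · simp only [St.rd_v, St.rd_p]; grind
    · simp only [St.rd_v, St.rd_p]; grind
  · exact fr_close hn h hI (by omega) hN h₀ hv hw hvw

/-- If WBreaker stands at the only vertex of `U` that he has joined to `p₀` or `p₁`, WMaker closes
her path and leaves this vertex for later. -/
theorem win_m3 (hn : 2000 ≤ n) (h : PreS σ U ∅ p₀ p₁) (hU : 5 ≤ U.card)
    (hi : ∀ x ∈ U, ∀ y ∈ U, ¬ σ.B.Adj x y) (hv : σ.v ∈ U)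
    (ho : ∀ x ∈ U, x ≠ σ.v → ¬ σ.B.Adj p₀ x ∧ ¬ σ.B.Adj p₁ x)
    (hN : ∀ y ∈ U, ¬ σ.B.Adj σ.p y) (h₀ : ¬ σ.B.Adj σ.p p₀) : St.Win (U.card + 7) σ := by
  refine St.Win.step fun w hw => ?_
  have hpU := h.pU
  have hp0U := h.p₀U
  have hp1U := h.p₁U
  refine close hn h hw hv (by omega) ?_ (fun y hy z hz => ?_) (fun y hy => ?_)
  · rw [St.bb_adj]; grind
  · have := hi y (Finset.mem_of_mem_erase hy) z (Finset.mem_of_mem_erase hz)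
    rw [St.bb_adj]; grind
  · have h1 := hN y (Finset.mem_of_mem_erase hy)
    have h2 := ho y (Finset.mem_of_mem_erase hy) (Finset.ne_of_mem_erase hy)
    simp only [St.bb_adj]
    grind

end Close

/-! ### Eliminating the exceptional vertices -/

section Main

variable {n : ℕ} {σ : St n} {U H : Finset (Fin n)} {p₀ p₁ q : Fin n}

/-- WBreaker's edges between `U` and the first two vertices of the path all end in `q`, he has
no edge inside `U`, and none from WMaker's position to `U`. -/
structure AtQ (σ : St n) (U : Finset (Fin n)) (p₀ p₁ q : Fin n) : Prop where
  qU : q ∈ U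
  ins : ∀ x ∈ U, ∀ y ∈ U, ¬ σ.B.Adj x y
  out : ∀ x ∈ U, x ≠ q → ¬ σ.B.Adj p₀ x ∧ ¬ σ.B.Adj p₁ x
  cur : ∀ y ∈ U, ¬ σ.B.Adj σ.p y

/-- Visiting `q` restores the invariant without exceptions, provided WBreaker's new edge does no
harm. -/
theorem AtQ.visit (h : PreS σ U ∅ p₀ p₁) (hq : AtQ σ U p₀ p₁ q) {k : ℕ}
    (hP : ∀ (σ : St n) (U : Finset (Fin n)), PreS σ U ∅ p₀ p₁ → Ctrl σ U {p₀, p₁} ∅ →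
      k ≤ U.card → St.Win (U.card + 7) σ)
    (hU : k + 1 ≤ U.card) {w : Fin n} (hw : σ.Br w) (hf : ¬ (σ.bb w).Adj σ.p q)
    (h1 : σ.v ∉ U) (h2 : w ∈ U → w = q ∨ (σ.v ≠ p₀ ∧ σ.v ≠ p₁)) :
    ∃ u, σ.Mk w u ∧ St.Win (U.card + 6) (σ.rd w u) := by
  obtain ⟨hmk, hst⟩ := h.step' hw hq.qU hf
  have hc := Finset.card_erase_add_one hq.qU
  have hp0U := h.p₀U
  have hp1U := h.p₁U
  obtain ⟨a1, a2, a3, a4⟩ := hq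
  refine ⟨q, hmk, ?_⟩
  have := hP _ _ hst ⟨by simp, by simp only [St.rd_p]; grind, by grind, ?_, ?_, ?_⟩ (by omega)
  · rwa [show U.card + 6 = (U.erase q).card + 7 by omega]
  · intro x hx y hy
    have := a2 x (Finset.mem_of_mem_erase hx) y (Finset.mem_of_mem_erase hy)
    rw [St.rd_B, St.bb_adj]; grind
  · intro x hx _ s hs
    have := a3 x (Finset.mem_of_mem_erase hx) (Finset.ne_of_mem_erase hx)
    rw [St.rd_B, St.bb_adj]; grind
  · intro x hx
    have := a2 q a1 x (Finset.mem_of_mem_erase hx)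
    simp only [St.rd_B, St.rd_p, St.rd_v, St.bb_adj]; grind

/-- WBreaker stands at WMaker's position: unless he moves to `q`, she visits `q`; if he does, she
goes elsewhere and then closes her path without `q`. The hypothesis `hP` covers positions without
exceptions. -/
theorem win_m2 (hn : 2000 ≤ n) {k : ℕ} (hk : 5 ≤ k) (h : PreS σ U ∅ p₀ p₁)
    (hq : AtQ σ U p₀ p₁ q) (hv : σ.v = σ.p)
    (hP : ∀ (σ : St n) (U : Finset (Fin n)), PreS σ U ∅ p₀ p₁ → Ctrl σ U {p₀, p₁} ∅ →
      k ≤ U.card → St.Win (U.card + 7) σ)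
    (hU : k + 1 ≤ U.card) (hp₁ : σ.p ≠ p₁) : St.Win (U.card + 7) σ := by
  refine St.Win.step fun w hw => ?_
  have hpU := h.pU
  have hp0U := h.p₀U
  have hp1U := h.p₁U
  have hp0 := h.p_ne
  have hqU := hq.qU
  have hcur := hq.cur
  by_cases hwq : w = q
  · -- WBreaker has claimed the edge from WMaker's position to `q`, so he now stands at `q`.
    obtain ⟨u, hu, huq⟩ := Finset.exists_mem_notMem_of_card_lt_card (s := {q}) (t := U)
      (by rw [Finset.card_singleton]; omega)
    rw [Finset.mem_singleton] at huq
    have hf : ¬ (σ.bb w).Adj σ.p u := by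
      have := hcur u hu
      rw [St.bb_adj]; grind
    obtain ⟨hmk, hst⟩ := h.step' hw hu hf
    have hc := Finset.card_erase_add_one hu
    refine ⟨u, hmk, ?_⟩
    rw [← hc]
    refine win_m3 hn hst (by omega) ?_ ?_ ?_ ?_ ?_
    · intro x hx y hy
      have := hq.ins x (Finset.mem_of_mem_erase hx) y (Finset.mem_of_mem_erase hy)
      rw [St.rd_B, St.bb_adj]; grind
    · simp only [St.rd_v]; grind
    · intro x hx
      have := hq.out x (Finset.mem_of_mem_erase hx)
      simp only [St.rd_v, St.rd_B, St.bb_adj]; grind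
    · intro y hy
      have := hq.ins u hu y (Finset.mem_of_mem_erase hy)
      simp only [St.rd_p, St.rd_B, St.bb_adj]; grind
    · have := hq.out u hu huq
      rw [SimpleGraph.adj_comm]
      simp only [St.rd_p, St.rd_B, St.bb_adj]; grind
  · refine hq.visit h hP hU hw ?_ (by rw [hv]; exact hpU) (by grind)
    have := hcur q hqU
    rw [St.bb_adj]; grind

/-- WBreaker stands at `p₀` or `p₁`: if he moves to a vertex of `U` other than `q`, WMaker visits
that vertex, and otherwise she visits `q`. -/
theorem win_m1 (hn : 2000 ≤ n) {k : ℕ} (hk : 5 ≤ k) (h : PreS σ U ∅ p₀ p₁)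
    (hq : AtQ σ U p₀ p₁ q) (hv : σ.v = p₀ ∨ σ.v = p₁)
    (hP : ∀ (σ : St n) (U : Finset (Fin n)), PreS σ U ∅ p₀ p₁ → Ctrl σ U {p₀, p₁} ∅ →
      k ≤ U.card → St.Win (U.card + 7) σ)
    (hU : k + 2 ≤ U.card) (hp₁ : σ.p ≠ p₁) : St.Win (U.card + 7) σ := by
  refine St.Win.step fun w hw => ?_
  have hpU := h.pU
  have hp0U := h.p₀U
  have hp1U := h.p₁U
  have hp0 := h.p_ne
  have hqU := hq.qU
  have hcur := hq.cur
  by_cases hwq : w ∈ U ∧ w ≠ q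
  · have hf : ¬ (σ.bb w).Adj σ.p w := by
      have := hcur w hwq.1
      rw [St.bb_adj]; grind
    obtain ⟨hmk, hst⟩ := h.step' hw hwq.1 hf
    have hc := Finset.card_erase_add_one hwq.1
    refine ⟨w, hmk, ?_⟩
    rw [← hc]
    refine win_m2 (q := q) hn hk hst ⟨by grind, ?_, ?_, ?_⟩ rfl hP (by omega)
      (by simp only [St.rd_p]; grind)
    · intro x hx y hy
      have := hq.ins x (Finset.mem_of_mem_erase hx) y (Finset.mem_of_mem_erase hy)
      rw [St.rd_B, St.bb_adj]; grind
    · intro x hx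
      have := hq.out x (Finset.mem_of_mem_erase hx)
      simp only [St.rd_B, St.bb_adj]; grind
    · intro y hy
      have := hq.ins w hwq.1 y (Finset.mem_of_mem_erase hy)
      simp only [St.rd_p, St.rd_B, St.bb_adj]; grind
  · refine hq.visit h hP (by omega) hw ?_ (by grind) (by grind)
    have := hcur q hqU
    rw [St.bb_adj]; grind

/-- A measure of progress depending on where WBreaker stands: it decreases in each round in which
WMaker preserves the invariant `Ctrl` without visiting a vertex of `H`. -/
noncomputable def delay (σ : St n) (S U H : Finset (Fin n)) : ℕ :=
  if σ.v ∈ H then 2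
  else if σ.v = σ.p then (if ∃ x ∈ H, σ.B.Adj σ.p x then 6 else 3)
  else if σ.v ∈ S then 4
  else if σ.v ∈ U then 5
  else 1

theorem delay_le (σ : St n) (S U H : Finset (Fin n)) : delay σ S U H ≤ 6 := by
  unfold delay; split_ifs <;> omega

/-- The statement to be proved by induction on `m`: WMaker wins from every position that
satisfies the invariant and has measure `m`. -/
def Goal (p₀ p₁ : Fin n) (m : ℕ) : Prop :=
  ∀ (σ : St n) (U H : Finset (Fin n)), PreS σ U H p₀ p₁ → Ctrl σ U {p₀, p₁} H → H ⊆ U →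
    H.card ≤ 2 → 8 * H.card + delay σ {p₀, p₁} U H = m → 10 + 3 * m ≤ U.card →
    St.Win (U.card + 7) σ

/-- The position after WMaker visits an exceptional vertex that WBreaker has just left towards
a vertex of `U`: he stands at the only vertex of `U` to which he blocks her. -/
theorem win_c (hn : 2000 ≤ n) {m : ℕ} (hm : m = 8 * H.card + 7) (ih : ∀ m' < m, Goal p₀ p₁ m')
    (h : PreS σ U H p₀ p₁) (hHU : H ⊆ U) (hH : H.card ≤ 1)
    (hi : ∀ x ∈ U, ∀ y ∈ U, ¬ σ.B.Adj x y)
    (ho : ∀ x ∈ U, x ∉ H → ∀ s ∈ ({p₀, p₁} : Finset (Fin n)), ¬ σ.B.Adj s x)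
    (hvU : σ.v ∈ U) (hvH : σ.v ∉ H) (hN : ∀ x ∈ U, σ.B.Adj σ.p x → x = σ.v)
    (hU : 10 + 3 * m ≤ U.card) : St.Win (U.card + 7) σ := by
  refine St.Win.step fun w hw => ?_
  have hpU := h.pU
  have hp0U := h.p₀U
  have hp1U := h.p₁U
  have hp0 := h.p_ne
  have hwv := hw.1
  have hfree : ∀ u ∈ U, u ≠ σ.v → ¬ (σ.bb w).Adj σ.p u := fun u hu huv => by
    have := hN u hu
    rw [St.bb_adj]; grind
  have hins : ∀ u ∈ U, (w ∈ U → u = w) → ∀ x ∈ U.erase u, ∀ y ∈ U.erase u,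
      ¬ (σ.bb w).Adj x y := fun u hu huw x hx y hy => by
    have := hi x (Finset.mem_of_mem_erase hx) y (Finset.mem_of_mem_erase hy)
    rw [St.bb_adj]; grind
  by_cases hwU : w ∈ U
  · obtain ⟨hmk, hst⟩ := h.step hw hwU (hfree w hwU hwv)
    have hc := Finset.card_erase_add_one hwU
    have hcH := Finset.card_erase_le (s := H) (a := w)
    have hrk : delay (σ.rd w w) {p₀, p₁} (U.erase w) (H.erase w) = 3 := by
      have hno : ¬ ∃ x ∈ H.erase w, (σ.rd w w).B.Adj (σ.rd w w).p x := by
        rintro ⟨x, hx, hwx⟩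
        have := hi w hwU x (hHU (Finset.mem_of_mem_erase hx))
        rw [St.rd_B, St.rd_p, St.bb_adj] at hwx; grind
      unfold delay
      rw [if_neg (by simp), if_pos (by simp), if_neg hno]
    refine ⟨w, hmk, ?_⟩
    rw [← hc]
    refine ih (8 * (H.erase w).card + 3) (by omega) _ _ _ hst ⟨by simp, ?_, ?_,
      hins w hwU (fun _ => rfl), ?_, ?_⟩ (Finset.erase_subset_erase w hHU) (by omega)
      (by rw [hrk]) (by omega)
    · simp only [St.rd_p]; grind
    · grind
    · intro x hx hxH s hs
      have := ho x (Finset.mem_of_mem_erase hx)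
      rw [St.rd_B, St.bb_adj]; grind
    · intro x hx
      have := fun y hy => hi w hwU y (Finset.mem_of_mem_erase (a := w) hy)
      simp only [St.rd_p, St.rd_B, St.rd_v, St.bb_adj]; grind
  · -- WMaker visits the remaining exceptional vertex, if there is one.
    obtain ⟨u, hu, huv, huH⟩ : ∃ u ∈ U, u ≠ σ.v ∧ H.erase u = ∅ := by
      rcases Finset.eq_empty_or_nonempty H with rfl | ⟨u, hu⟩
      · obtain ⟨u, hu, huv⟩ := Finset.exists_mem_notMem_of_card_lt_card (s := {σ.v}) (t := U)
          (by rw [Finset.card_singleton]; omega)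
        exact ⟨u, hu, by simpa using huv, by simp⟩
      · refine ⟨u, hHU hu, fun e => hvH (e ▸ hu), ?_⟩
        rw [← Finset.card_eq_zero, Finset.card_erase_of_mem hu]; omega
    obtain ⟨hmk, hst⟩ := h.step hw hu (hfree u hu huv)
    rw [huH] at hst
    have hHu : ∀ x ∈ H, x = u := fun x hx => by
      by_contra hxu
      exact Finset.notMem_empty x (huH ▸ Finset.mem_erase.2 ⟨hxu, hx⟩)
    have hc := Finset.card_erase_add_one hu
    have hP : ∀ (σ : St n) (U : Finset (Fin n)), PreS σ U ∅ p₀ p₁ → Ctrl σ U {p₀, p₁} ∅ →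
        28 ≤ U.card → St.Win (U.card + 7) σ := fun σ U h1 h2 h3 => by
      have := delay_le σ {p₀, p₁} U ∅
      exact ih (delay σ {p₀, p₁} U ∅) (by omega) _ _ _ h1 h2 (by simp) (by simp)
        (by simp) (by omega)
    refine ⟨u, hmk, ?_⟩
    rw [← hc]
    have hcur : ∀ y ∈ U.erase u, ¬ (σ.bb w).Adj u y := fun y hy => by
      have := hi u hu y (Finset.mem_of_mem_erase hy)
      rw [St.bb_adj]; grind
    by_cases hwS : w = p₀ ∨ w = p₁
    · refine win_m1 (q := σ.v) hn (by omega) hst ⟨by grind, hins u hu (by simp [hwU]), ?_, hcur⟩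
        hwS hP (by omega) (by simp only [St.rd_p]; grind)
      intro x hx hxv
      have := ho x (Finset.mem_of_mem_erase hx) (by grind)
      have h1 := this p₀ (by simp)
      have h2 := this p₁ (by simp)
      simp only [St.rd_B, St.bb_adj]; grind
    · refine hP _ _ hst ⟨by simp, ?_, ?_, hins u hu (by simp [hwU]), ?_, ?_⟩ (by omega)
      · simp only [St.rd_p]; grind
      · grind
      · intro x hx _ s hs
        have := ho x (Finset.mem_of_mem_erase hx) (by grind) s hs
        rw [St.rd_B, St.bb_adj]; grind
      · intro x hx hh
        exact absurd hh (hcur x hx)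

end Main

section Phases

variable {n : ℕ} {p₀ p₁ : Fin n}

/-- WMaker wins with at most two exceptional vertices: by the measure in `Goal` they are visited one
by one, after which she closes her path. -/
theorem goal (hn : 2000 ≤ n) (m : ℕ) : Goal p₀ p₁ m := by
  induction m using Nat.strong_induction_on with
  | _ m ih =>
  intro σ U H h hI hHU hH hm hU
  refine St.Win.step fun w hw => ?_
  have hpU := h.pU
  have hp0U := h.p₀U
  have hp1U := h.p₁U
  have hwv := hw.1
  have hpS := hI.pS
  have hdj := hI.disj
  have hins := hI.ins
  -- a visit to `u` that preserves the invariant and decreases the measure wins by induction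
  have next : ∀ u ∈ U, ¬ (σ.bb w).Adj σ.p u →
      (σ.v ∈ U → w ∈ U → u = w) →
      (σ.v ∈ U → σ.v ∉ H → w ∈ ({p₀, p₁} : Finset (Fin n)) → u = σ.v) →
      (σ.v ∈ ({p₀, p₁} : Finset (Fin n)) → w ∈ U → w ∉ H → u = w) →
      (u ∈ H ∨ delay (σ.rd w u) {p₀, p₁} (U.erase u) (H.erase u) < delay σ {p₀, p₁} U H) →
      ∃ u, σ.Mk w u ∧ St.Win (U.card + 6) (σ.rd w u) := by
    intro u hu hf h1 h2 h3 hd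
    obtain ⟨hmk, hst⟩ := h.step hw hu hf
    have hc := Finset.card_erase_add_one hu
    have hcH := Finset.card_erase_le (s := H) (a := u)
    have hlt : 8 * (H.erase u).card +
        delay (σ.rd w u) {p₀, p₁} (U.erase u) (H.erase u) < m := by
      rcases hd with hd | hd
      · have := Finset.card_erase_add_one hd
        have := delay_le (σ.rd w u) {p₀, p₁} (U.erase u) (H.erase u)
        have : 0 < delay σ {p₀, p₁} U H := by unfold delay; split_ifs <;> omega
        omega
      · omega
    refine ⟨u, hmk, ?_⟩
    have := ih _ hlt _ _ _ hst (hI.step hu h1 h2 h3) (Finset.erase_subset_erase u hHU)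
      (by omega) rfl (by omega)
    rwa [show U.card + 6 = (U.erase u).card + 7 by omega]
  have hsub : ∀ x ∈ H, x ∈ U := fun x hx => hHU hx
  -- WBreaker enters `H` from `U`
  by_cases c1 : σ.v ∈ U ∧ w ∈ H
  · exact next w (hHU c1.2) (hI.free (hHU c1.2) (Or.inl c1.1) (Or.inl (hHU c1.2)))
      (by grind) (by grind) (by grind) (Or.inl c1.2)
  -- WBreaker leaves `H` towards another vertex of `U`
  by_cases c2 : σ.v ∈ H ∧ w ∈ U
  · have hvU := hHU c2.1
    have hf := hI.free (w := w) hvU (Or.inl hvU) (Or.inl c2.2)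
    obtain ⟨hmk, hst⟩ := h.step hw hvU hf
    have hc := Finset.card_erase_add_one hvU
    have hcH := Finset.card_erase_add_one c2.1
    have hd : delay σ {p₀, p₁} U H = 2 := by unfold delay; rw [if_pos c2.1]
    refine ⟨σ.v, hmk, ?_⟩
    rw [← hc]
    refine win_c hn rfl (fun m' hm' => ih m' (by omega)) hst (Finset.erase_subset_erase _ hHU)
      (by omega) ?_ ?_ ?_ ?_ ?_ (by omega)
    · intro x hx y hy
      have := hins x (Finset.mem_of_mem_erase hx) y (Finset.mem_of_mem_erase hy)
      rw [St.rd_B, St.bb_adj]; grind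
    · intro x hx hxH s hs
      have := hI.out x (Finset.mem_of_mem_erase hx)
      rw [St.rd_B, St.bb_adj]; grind
    · simp only [St.rd_v]; grind
    · simp only [St.rd_v]; grind
    · intro x hx
      have := hins _ hvU x (Finset.mem_of_mem_erase hx)
      simp only [St.rd_v, St.rd_p, St.rd_B, St.bb_adj]; grind
  -- WBreaker enters a vertex of `U` outside `H` from `U` or from the start of the path
  by_cases c3 : w ∈ U ∧ (σ.v ∈ U ∨ σ.v ∈ ({p₀, p₁} : Finset (Fin n)))
  · obtain ⟨hwU, hv⟩ := c3
    by_cases hwH : w ∈ H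
    · exact next w hwU (hI.free hwU hv (Or.inl hwU)) (by grind) (by grind) (by grind)
        (Or.inl hwH)
    refine next w hwU (hI.free hwU hv (Or.inl hwU)) (by grind) (by grind) (by grind) (Or.inr ?_)
    have hno : ¬ ∃ x ∈ H.erase w, (σ.rd w w).B.Adj (σ.rd w w).p x := by
      rintro ⟨x, hx, hwx⟩
      have := hins w hwU x (hHU (Finset.mem_of_mem_erase hx))
      rw [St.rd_B, St.rd_p, St.bb_adj] at hwx; grind
    have hl : delay (σ.rd w w) {p₀, p₁} (U.erase w) (H.erase w) = 3 := by
      unfold delay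
      rw [if_neg (by simp), if_pos (by simp), if_neg hno]
    rw [hl]
    unfold delay
    grind
  -- WBreaker moves from `U` to the start of the path
  by_cases c4 : σ.v ∈ U ∧ σ.v ∉ H ∧ w ∈ ({p₀, p₁} : Finset (Fin n))
  · obtain ⟨hvU, hvH, hwS⟩ := c4
    refine next σ.v hvU (hI.free hvU (Or.inl hvU) (Or.inr hwS)) (by grind) (by grind) (by grind)
      (Or.inr ?_)
    have hl : delay (σ.rd w σ.v) {p₀, p₁} (U.erase σ.v) (H.erase σ.v) = 4 := by
      unfold delay
      rw [if_neg (by simp only [St.rd_v]; grind), if_neg (by simpa using hwv),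
        if_pos (by simpa using hwS)]
    rw [hl]
    unfold delay
    grind
  -- WBreaker's edge does not matter; WMaker visits a vertex of `H` if she can
  by_cases c5 : ∃ x ∈ H, ¬ (σ.bb w).Adj σ.p x
  · obtain ⟨x, hx, hf⟩ := c5
    exact next x (hHU hx) hf (by grind) (by grind) (by grind) (Or.inl hx)
  push Not at c5
  obtain ⟨u, hu, huH, huw, hf⟩ := hI.exists_free H (by omega) w
  rcases Finset.eq_empty_or_nonempty H with rfl | ⟨x, hx⟩
  · obtain ⟨hmk, hst⟩ := h.step' hw hu hf
    have hc := Finset.card_erase_add_one hu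
    have hst2 := hI.step hu (w := w) (by grind) (by grind) (by grind)
    rw [Finset.erase_eq_of_notMem (Finset.notMem_empty u)] at hst2
    refine ⟨u, hmk, ?_⟩
    rw [← hc]
    refine win_fr hn hst hst2 (by omega) ?_ ?_ (by simpa using huw.symm)
    · intro y hy
      have := hins u hu y (Finset.mem_of_mem_erase hy)
      simp only [St.rd_p, St.rd_B, St.bb_adj]; grind
    · have := hI.out u hu (by simp) p₀ (by simp)
      rw [SimpleGraph.adj_comm]
      simp only [St.rd_p, St.rd_B, St.bb_adj]; grind
  · refine next u hu hf (by grind) (by grind) (by grind) (Or.inr ?_)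
    rw [Finset.erase_eq_of_notMem huH]
    have hb := c5 x hx
    rw [St.bb_adj] at hb
    have hcur := hI.cur x (hHU hx)
    have hcase : (σ.v ∈ H ∧ w = σ.p) ∨ (σ.v = σ.p ∧ w ∈ H) ∨
        (σ.v = σ.p ∧ ∃ x ∈ H, σ.B.Adj σ.p x) := by grind
    rcases hcase with ⟨hvH, hwp⟩ | ⟨hvp, hwH⟩ | ⟨hvp, hex⟩
    · have hl : delay (σ.rd w u) {p₀, p₁} (U.erase u) H = 1 := by
        have e1 : (σ.rd w u).v ∉ H := fun h' => hpU (hwp ▸ hHU h')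
        have e2 : (σ.rd w u).v ≠ (σ.rd w u).p := huw.symm
        have e3 : (σ.rd w u).v ∉ ({p₀, p₁} : Finset (Fin n)) := by
          rw [St.rd_v, hwp]; exact hpS
        have e4 : (σ.rd w u).v ∉ U.erase u := fun h' =>
          hpU (hwp ▸ Finset.mem_of_mem_erase h')
        unfold delay
        rw [if_neg e1, if_neg e2, if_neg e3, if_neg e4]
      have ho : delay σ {p₀, p₁} U H = 2 := by unfold delay; rw [if_pos hvH]
      omega
    · have hl : delay (σ.rd w u) {p₀, p₁} (U.erase u) H = 2 := by
        unfold delay; exact if_pos hwH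
      have hvH : σ.v ∉ H := fun h' => hpU (hvp ▸ hHU h')
      have ho : 3 ≤ delay σ {p₀, p₁} U H := by
        unfold delay; rw [if_neg hvH, if_pos hvp]; split_ifs <;> omega
      omega
    · have hl : delay (σ.rd w u) {p₀, p₁} (U.erase u) H ≤ 5 := by
        have e2 : (σ.rd w u).v ≠ (σ.rd w u).p := huw.symm
        unfold delay; rw [if_neg e2]; split_ifs <;> omega
      have hvH : σ.v ∉ H := fun h' => hpU (hvp ▸ hHU h')
      have ho : delay σ {p₀, p₁} U H = 6 := by
        unfold delay; rw [if_neg hvH, if_pos hvp, if_pos hex]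
      omega

/-! ### The long first stage -/

/-- While visiting most of the vertices, WMaker keeps the number of unvisited vertices at which
WBreaker has an edge at most two; these become the exceptional ones. -/
theorem win_long (hn : 2000 ≤ n) : ∀ (k : ℕ) (σ : St n) (U T : Finset (Fin n)),
    PreS σ U U p₀ p₁ → Ctrl σ U ∅ ∅ → T.card ≤ 2 → (∀ x ∈ U, ∀ y, σ.B.Adj x y → x ∈ T) →
    (∃ y, σ.B.Adj σ.v y) → U.card = k + 100 → St.Win (U.card + 7) σ
  | 0, σ, U, T, h, hI, hT, hTU, hv, hU => by
    have hcT : (T ∩ U).card ≤ 2 := (Finset.card_le_card Finset.inter_subset_left).trans hT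
    have hd := delay_le σ {p₀, p₁} U (T ∩ U)
    have hne : σ.p ≠ p₁ := h.path.ne (by have := Finset.card_insert_le p₀ U; omega)
    have hp0U := h.p₀U
    have hp1U := h.p₁U
    have hp0 := h.p_ne
    refine goal (p₀ := p₀) (p₁ := p₁) hn _ σ U (T ∩ U)
      ⟨h.path, h.adj, h.p₀U, h.time, fun y hy hyT => ?_⟩
      ⟨hI.pU, by simp [hne, hp0], by grind, hI.ins, fun x hx hxT s _ hs => ?_, hI.cur⟩
      Finset.inter_subset_right hcT rfl (by omega)
    · have : nb σ.B y = ∅ := by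
        ext z
        simp only [mem_nb, Finset.notMem_empty, iff_false]
        exact fun hz => hyT (Finset.mem_inter.2 ⟨hTU y hy z hz, hy⟩)
      rw [this, Finset.card_empty]; omega
    · exact hxT (Finset.mem_inter.2 ⟨hTU x hx s hs.symm, hx⟩)
  | k + 1, σ, U, T, h, hI, hT, hTU, ⟨z, hvz⟩, hU => by
    refine St.Win.step fun w hw => ?_
    have hwv := hw.1
    have hpU := h.pU
    set T' := U.filter (fun x => ∃ y, (σ.bb w).Adj x y) with hT'
    have memT' : ∀ x, x ∈ T' ↔ x ∈ U ∧ ∃ y, (σ.bb w).Adj x y := fun x => by simp [hT']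
    have hsub : ∀ x ∈ T', x = w ∨ x ∈ T := by
      intro x hx
      obtain ⟨hxU, y, hy⟩ := (memT' x).1 hx
      rw [St.bb_adj] at hy
      have := hTU x hxU
      grind
    have hcT' : T'.card ≤ 3 := by
      have := Finset.card_le_card (s := T') (t := insert w T) fun x hx => by
        simpa using hsub x hx
      have := Finset.card_insert_le w T
      omega
    have next : ∀ u ∈ U, ¬ (σ.bb w).Adj σ.p u → (σ.v ∈ U → w ∈ U → u = w) →
        (T'.erase u).card ≤ 2 → ∃ u, σ.Mk w u ∧ St.Win (U.card + 6) (σ.rd w u) := by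
      intro u hu hf h1 h2
      obtain ⟨hmk, hst⟩ := h.step hw hu hf
      have hc := Finset.card_erase_add_one hu
      have hI' := hI.step hu (w := w) h1 (by simp) (by simp)
      rw [Finset.erase_eq_of_notMem (Finset.notMem_empty u)] at hI'
      refine ⟨u, hmk, ?_⟩
      rw [← hc]
      refine win_long hn k _ _ (T'.erase u) hst hI' h2 (fun x hx y hy => ?_) ⟨σ.v, ?_⟩ (by omega)
      · rw [Finset.mem_erase, memT']
        exact ⟨Finset.ne_of_mem_erase hx, Finset.mem_of_mem_erase hx, y, hy⟩
      · rw [St.rd_B, St.bb_adj]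
        exact Or.inr ⟨Or.inr ⟨rfl, rfl⟩, hwv⟩
    have heat : ∀ u ∈ T', (T'.erase u).card ≤ 2 := fun u hu => by
      rw [Finset.card_erase_of_mem hu]; omega
    by_cases c1 : σ.v ∈ U ∧ w ∈ U
    · refine next w c1.2 (hI.free c1.2 (Or.inl c1.1) (Or.inl c1.2)) (fun _ _ => rfl) (heat w ?_)
      exact (memT' w).2 ⟨c1.2, σ.v, (St.bb_adj _ _ _ _).2 (Or.inr ⟨Or.inr ⟨rfl, rfl⟩, hwv⟩)⟩
    by_cases c2 : ∃ u ∈ T', ¬ (σ.bb w).Adj σ.p u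
    · obtain ⟨u, hu, hf⟩ := c2
      exact next u ((memT' u).1 hu).1 hf (by grind) (heat u hu)
    · push Not at c2
      -- all of `T'` is blocked, whence it has at most two elements
      have hT2 : T'.card ≤ 2 := by
        by_contra hcon
        obtain ⟨a, ha, b, hb, c, hc, hab, hac, hbc⟩ := Finset.two_lt_card.1 (not_le.1 hcon)
        have ha1 := c2 a ha
        have hb1 := c2 b hb
        have hc1 := c2 c hc
        rw [St.bb_adj] at ha1 hb1 hc1
        have ha2 := hI.cur a ((memT' a).1 ha).1
        have hb2 := hI.cur b ((memT' b).1 hb).1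
        have hc2 := hI.cur c ((memT' c).1 hc).1
        have := ((memT' a).1 ha).1
        have := ((memT' b).1 hb).1
        have := ((memT' c).1 hc).1
        grind
      obtain ⟨u, hu, huT⟩ := Finset.exists_mem_notMem_of_card_lt_card (s := T') (t := U)
        (by omega)
      refine next u hu (fun hf => huT ((memT' u).2 ⟨hu, σ.p, hf.symm⟩)) (by grind) ?_
      exact Finset.card_erase_le.trans hT2

/-- The position before the first move of WBreaker along the edge `b₀ b₁`, with WMaker
standing at `b₁`. -/
def St.start (b₀ b₁ : Fin n) : St n := ⟨b₁, b₀, ⊥, ⊥⟩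

theorem base_start (b₀ b₁ : Fin n) : Base (St.start b₀ b₁) 0 := by
  refine ⟨fun x y h => h.elim, fun x => ?_⟩
  have : nb (St.start b₀ b₁).B x = ∅ := by
    ext z; simp [St.start]
  rw [this]; simp

/-- WMaker starts at `b₁`, where WBreaker stands, and moves to any vertex outside his first edge. -/
theorem win_start (hn : 2000 ≤ n) {b₀ b₁ : Fin n} (hb : b₀ ≠ b₁) :
    ∃ u, (St.start b₀ b₁).Mk b₁ u ∧ St.Win (n + 5) ((St.start b₀ b₁).rd b₁ u) := by
  obtain ⟨u, -, hu⟩ := Finset.exists_mem_notMem_of_card_lt_card (s := {b₀, b₁})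
    (t := (Finset.univ : Finset (Fin n))) (by
      have := Finset.card_le_two (a := b₀) (b := b₁)
      rw [Finset.card_fin]; omega)
  simp only [Finset.mem_insert, Finset.mem_singleton, not_or] at hu
  have hmk : (St.start b₀ b₁).Mk b₁ u := by
    refine ⟨hu.2, ?_⟩
    rw [St.bb_adj]
    simp only [St.start, SimpleGraph.bot_adj]
    grind
  refine ⟨u, hmk, ?_⟩
  set U : Finset (Fin n) := Finset.univ \ {b₁, u} with hU
  have memU : ∀ x, x ∈ U ↔ x ≠ b₁ ∧ x ≠ u := fun x => by simp [hU]
  have hcU : U.card + 2 = n := by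
    have := Finset.card_sdiff_add_card_eq_card (Finset.subset_univ ({b₁, u} : Finset (Fin n)))
    rwa [Finset.card_pair (Ne.symm hu.2), Finset.card_fin] at this
  have hB : ∀ x y, ((St.start b₀ b₁).rd b₁ u).B.Adj x y →
      (x = b₀ ∧ y = b₁ ∨ x = b₁ ∧ y = b₀) := fun x y h => by
    rw [St.rd_B, St.bb_adj] at h
    simp only [St.start, SimpleGraph.bot_adj, false_or] at h
    exact h.1
  have := win_long (p₀ := b₁) (p₁ := u) hn (U.card - 100) ((St.start b₀ b₁).rd b₁ u) U {b₀}
    ⟨⟨SimpleGraph.Walk.nil, by simp, fun x => ?_⟩, ?_, by simp [memU],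
      ⟨1, (base_start b₀ b₁).step ⟨hb.symm, fun h => h.elim⟩ hmk, by omega⟩,
      fun y hy hy' => absurd hy hy'⟩
    ⟨by simp [memU], by simp, by simp, fun x hx y hy h => ?_, by simp, fun x hx h => ?_⟩
    (by simp) (fun x hx y h => ?_) ⟨b₀, ?_⟩ (by omega)
  · rwa [show n + 5 = U.card + 7 by omega]
  · simp only [SimpleGraph.Walk.support_nil, List.mem_singleton, Finset.mem_insert, memU, St.rd_p]
    grind
  · rw [St.rd_M_adj]; simp [St.start, hu.2]
  · have := hB x y h
    rw [memU] at hx hy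
    grind
  · have := hB _ x h
    rw [St.rd_p] at this
    grind
  · have := hB x y h
    rw [memU] at hx
    simp only [Finset.mem_singleton]
    grind
  · rw [St.rd_B, St.bb_adj]
    exact Or.inr ⟨Or.inr ⟨rfl, rfl⟩, hb.symm⟩

end Phases
/-! ### From positions to walks -/

section Strategy

variable {n : ℕ}

/-- WMaker's answer to WBreaker's move to `w`: one after which she can force a Hamilton cycle
within `k` further moves if there is such an answer, otherwise any legal one (and a junk value if
there is none either). -/
noncomputable def resp (k : ℕ) (σ : St n) (w : Fin n) : Fin n :=
  if h : ∃ u, σ.Mk w u ∧ St.Win k (σ.rd w u) then h.choose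
  else if h : ∃ u, σ.Mk w u then h.choose else σ.p

theorem resp_win {k : ℕ} {σ : St n} {w : Fin n} (h : ∃ u, σ.Mk w u ∧ St.Win k (σ.rd w u)) :
    σ.Mk w (resp k σ w) ∧ St.Win k (σ.rd w (resp k σ w)) := by
  unfold resp; rw [dif_pos h]; exact h.choose_spec

theorem resp_mk {k : ℕ} {σ : St n} {w : Fin n} (h : ∃ u, σ.Mk w u) :
    σ.Mk w (resp k σ w) := by
  unfold resp
  split_ifs with h1
  · exact h1.choose_spec.1
  · exact h.choose_spec

/-- The position after `i` rounds when WBreaker walks along `b` and WMaker answers by `resp`. -/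
noncomputable def play (b : ℕ → Fin n) : ℕ → St n
  | 0 => St.start (b 0) (b 1)
  | i + 1 => (play b i).rd (b (i + 1)) (resp (n + 5 - i) (play b i) (b (i + 1)))

theorem play_congr {b b' : ℕ → Fin n} : ∀ i, (∀ j ≤ max i 1, b j = b' j) → play b i = play b' i
  | 0, h => by
    unfold play
    rw [h 0 (by omega), h 1 (by omega)]
  | i + 1, h => by
    unfold play
    rw [play_congr i fun j hj => h j (by omega), h (i + 1) (by omega)]

theorem play_v (b : ℕ → Fin n) : ∀ i, (play b i).v = b i
  | 0 => rfl
  | _ + 1 => rfl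

theorem mem_claimedEdges_succ (w : ℕ → Fin n) (t : ℕ) (e : Sym2 (Fin n)) :
    e ∈ claimedEdges w (t + 1) ↔ e ∈ claimedEdges w t ∨ e = s(w t, w (t + 1)) := by
  constructor
  · rintro ⟨i, hi, rfl⟩
    rcases Nat.lt_succ_iff_lt_or_eq.1 hi with hi | rfl
    · exact Or.inl ⟨i, hi, rfl⟩
    · exact Or.inr rfl
  · rintro (⟨i, hi, rfl⟩ | rfl)
    · exact ⟨i, by omega, rfl⟩
    · exact ⟨t, by omega, rfl⟩

theorem walkGraph_zero (w : ℕ → Fin n) : walkGraph w 0 = ⊥ := by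
  ext x y
  simp [walkGraph, claimedEdges]

theorem walkGraph_succ (w : ℕ → Fin n) (t : ℕ) :
    walkGraph w (t + 1) = walkGraph w t ⊔ SimpleGraph.edge (w t) (w (t + 1)) := by
  ext x y
  simp only [walkGraph, SimpleGraph.fromEdgeSet_adj, SimpleGraph.sup_adj, SimpleGraph.edge_adj,
    mem_claimedEdges_succ, Sym2.eq_iff]
  tauto

theorem play_M (b : ℕ → Fin n) : ∀ i, (play b i).M = walkGraph (fun j => (play b j).p) i
  | 0 => (walkGraph_zero _).symm
  | i + 1 => by rw [walkGraph_succ, ← play_M b i]; rfl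

theorem play_B (b : ℕ → Fin n) : ∀ i, (play b i).B = walkGraph b i
  | 0 => (walkGraph_zero _).symm
  | i + 1 => by rw [walkGraph_succ, ← play_B b i, ← play_v b i]; rfl

/-- WMaker can always continue: if nothing better, along the edge she has come from. -/
theorem exists_mk {σ : St n} {t : ℕ} (h : Base σ t) {w u : Fin n} (hu : σ.M.Adj σ.p u)
    (hw : σ.Br w) : σ.Mk w u := by
  refine ⟨hu.ne', fun hB => ?_⟩
  rw [St.bb_adj] at hB
  rcases hB with hB | ⟨⟨h1, rfl⟩ | ⟨h1, h2⟩, _⟩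
  · exact h.disj _ _ hu hB
  · exact hw.2 (h1 ▸ hu)
  · exact hw.2 (h1 ▸ h2 ▸ hu.symm)

/-- WMaker's answer in round `i + 1` is legal, and afterwards she either has a Hamilton cycle or
can force one by her move number `n + 6`. The invariant `Base` is carried along because legality
of the fallback answer needs the two graphs to be edge-disjoint. -/
theorem play_spec (hn : 2000 ≤ n) {b : ℕ → Fin n} (hb : ∀ i, (play b i).Br (b (i + 1))) (i : ℕ) :
    (play b i).Mk (b (i + 1)) (play b (i + 1)).p ∧ Base (play b (i + 1)) (i + 1) ∧
      ((play b (i + 1)).M.IsHamiltonian ∨ i ≤ n + 5 ∧ St.Win (n + 5 - i) (play b (i + 1))) := by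
  induction i with
  | zero =>
    obtain ⟨h1, h2⟩ := resp_win (win_start hn (hb 0).1.symm)
    exact ⟨h1, (base_start _ _).step (hb 0) h1, Or.inr ⟨by omega, h2⟩⟩
  | succ i ih =>
    obtain ⟨hm, hB, hW⟩ := ih
    have hex : ∃ u, (play b (i + 1)).Mk (b (i + 2)) u := by
      refine ⟨(play b i).p, exists_mk hB ?_ (hb (i + 1))⟩
      exact (St.rd_M_adj _ _ _ _ _).2 (Or.inr ⟨Or.inr ⟨rfl, rfl⟩, hm.1⟩)
    have hmk : (play b (i + 1)).Mk (b (i + 2)) (play b (i + 2)).p := resp_mk hex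
    refine ⟨hmk, hB.step (hb (i + 1)) hmk, ?_⟩
    have hle : (play b (i + 1)).M ≤ (play b (i + 2)).M := St.M_le_rd _ _ _
    rcases hW with hW | ⟨hi, hW⟩
    · exact Or.inl (hW.mono hle)
    · obtain hi | hi := Nat.eq_or_lt_of_le hi
      · subst hi
        rw [Nat.sub_self] at hW
        exact Or.inl (SimpleGraph.IsHamiltonian.mono hle hW)
      · rw [show n + 5 - i = n + 5 - (i + 1) + 1 by omega] at hW
        rcases hW with hW | hW
        · exact Or.inl (SimpleGraph.IsHamiltonian.mono hle hW)
        · exact Or.inr ⟨by omega, (resp_win (hW _ (hb (i + 1)))).2⟩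

end Strategy

/-- **Theorem 2.**  For all sufficiently large `n`, in the `(1:1)` WMaker–WBreaker
Hamilton cycle game on `E(K_n)` with WBreaker moving first, WMaker has a strategy
guaranteeing that all of her moves are legal (each claims an edge, incident with her
current position, not claimed by WBreaker) and that after at most `n + 6` of her moves
the graph of her claimed edges contains a Hamilton cycle of `K_n`.  WBreaker's walk `b`
is quantified over all walks that are legal against WMaker's play. -/
theorem walkerMaker_walkerBreaker_hamilton_cycle :
    ∃ N : ℕ, ∀ n : ℕ, N ≤ n →
      ∃ σ : MakerStrategy n,
        ∀ b : ℕ → Fin n,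
          (∀ i, b i ≠ b (i + 1)) →
          (∀ i, s(b i, b (i + 1)) ∉ claimedEdges (fun j => σ.pos j b) i) →
          (∀ i, σ.pos i b ≠ σ.pos (i + 1) b ∧
              s(σ.pos i b, σ.pos (i + 1) b) ∉ claimedEdges b (i + 1)) ∧
          ∃ t ≤ n + 6, (walkGraph (fun j => σ.pos j b) t).IsHamiltonian := by
  refine ⟨2000, fun n hn => ⟨⟨fun i b => (play b i).p, fun i b b' h => by
    rw [play_congr i h]⟩, fun b hb1 hb2 => ?_⟩⟩
  have hb : ∀ i, (play b i).Br (b (i + 1)) := fun i => by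
    refine ⟨?_, fun h => hb2 i ?_⟩
    · rw [play_v]; exact (hb1 i).symm
    · rw [play_v, play_M, walkGraph, SimpleGraph.fromEdgeSet_adj] at h
      exact h.1
  refine ⟨fun i => ?_, n + 6, le_rfl, ?_⟩
  · obtain ⟨h1, h2⟩ := (play_spec hn hb i).1
    refine ⟨h1.symm, fun h => h2 ?_⟩
    have hB : (play b i).bb (b (i + 1)) = walkGraph b (i + 1) := play_B b (i + 1)
    rw [hB, walkGraph, SimpleGraph.fromEdgeSet_adj]
    exact ⟨h, h1.symm⟩
  · have h := (play_spec hn hb (n + 5)).2.2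
    rw [Nat.sub_self] at h
    rw [← play_M b (n + 6)]
    exact h.elim id And.right
end

section
/- For all n ≥ 4, in the (1:1) WMaker–WBreaker Connectivity game on the edge set of K_n with WMaker moving first, WBreaker (as the second player) has a strategy that guarantees that WMaker cannot visit all n vertices of K_n (equivalently, cannot build a spanning connected graph) in fewer than n of her moves. -/
/-!
Write `U` for the set of vertices WMaker has not visited. Since all of WMaker's edges lie outside
`U`, WBreaker can always step to a vertex of `U` other than his own position, if there is one. He
does so whenever possible; if `U` consists of his own position only, he steps to WMaker's current
vertex; otherwise he walks back along the edge he has just claimed, which WMaker cannot own.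

WMaker can visit all `n` vertices in at most `n - 1` moves only along a Hamiltonian path. When two
vertices `a`, `b` of the path remain, WBreaker steps to one of them. WMaker then moves to one of
`a`, `b`, and in either case WBreaker's rule makes him claim the edge `ab`, so WMaker cannot make
the last step of the path.
-/

open scoped Classical

/-- The set of vertices visited during the first `t` moves of the walk `w`,
i.e. the vertices incident with at least one of the first `t` claimed edges. -/
def visitedBy {n : ℕ} (w : ℕ → Fin n) (t : ℕ) : Set (Fin n) :=
  {v | ∃ i, i < t ∧ (w i = v ∨ w (i + 1) = v)}

/-- A strategy for WBreaker (playing second) in the `(1:1)` WMaker–WBreaker game on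
`E(K_n)` in which WMaker moves first.  Given WMaker's walk `m` (where `m j` is WMaker's
position after her `j`-th move), `pos i m` is WBreaker's position after his `i`-th move.
The causality condition states that WBreaker's position after `i` moves may depend only
on the part of WMaker's walk already played at that moment, namely `m 0, …, m (max i 1)`. -/
structure BreakerStrategy (n : ℕ) where
  pos : ℕ → (ℕ → Fin n) → Fin n
  causal : ∀ i m m', (∀ j ≤ max i 1, m j = m' j) → pos i m = pos i m'

/-- The vertices touched by `m` up to and including time `i + 1`: this is what WMaker has visited
when WBreaker is about to make the move from his position `i` to his position `i + 1`. -/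
def seen {n : ℕ} (m : ℕ → Fin n) (i : ℕ) : Set (Fin n) := {v | ∃ j ≤ i + 1, m j = v}

/-- WBreaker's rule for the next position, given the set `V` visited by WMaker, her current
position `x`, and WBreaker's previous and current positions `q` and `p`. -/
noncomputable def nextPos {n : ℕ} (V : Set (Fin n)) (x q p : Fin n) : Fin n :=
  if h : ∃ z, z ≠ p ∧ z ∉ V then h.choose else if p ∉ V then x else q

/-- WBreaker's previous and current positions after `i` moves; at time `0` the previous position
is a placeholder, never used because `nextPos` then has an unvisited vertex available. -/
noncomputable def breakerState {n : ℕ} (m : ℕ → Fin n) : ℕ → Fin n × Fin n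
  | 0 => (m 0, m 0)
  | i + 1 => ((breakerState m i).2,
      nextPos (seen m i) (m (i + 1)) (breakerState m i).1 (breakerState m i).2)

theorem breakerState_congr {n : ℕ} (m m' : ℕ → Fin n) (i : ℕ)
    (h : ∀ j ≤ max i 1, m j = m' j) : breakerState m i = breakerState m' i := by
  induction i with
  | zero => simp [breakerState, h 0 (by simp)]
  | succ i ih =>
    have h1 := ih (fun j hj => h j (by omega))
    have h2 : seen m i = seen m' i := by
      ext v
      constructor
      · rintro ⟨j, hj, rfl⟩
        exact ⟨j, hj, (h j (by omega)).symm⟩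
      · rintro ⟨j, hj, rfl⟩
        exact ⟨j, hj, h j (by omega)⟩
    simp only [breakerState, h1, h2, h (i + 1) (by omega)]

/-- The strategy given by `nextPos`. -/
noncomputable def greedyBreaker (n : ℕ) : BreakerStrategy n where
  pos i m := (breakerState m i).2
  causal i m m' h := by rw [breakerState_congr m m' i h]

theorem nextPos_of_exists {n : ℕ} {V : Set (Fin n)} {x q p : Fin n}
    (h : ∃ z, z ≠ p ∧ z ∉ V) : nextPos V x q p ≠ p ∧ nextPos V x q p ∉ V := by
  rw [nextPos, dif_pos h]
  exact h.choose_spec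

theorem nextPos_of_not_exists {n : ℕ} {V : Set (Fin n)} {x q p : Fin n}
    (h : ¬ ∃ z, z ≠ p ∧ z ∉ V) (hp : p ∉ V) : nextPos V x q p = x := by
  rw [nextPos, dif_neg h, if_pos hp]

theorem nextPos_of_mem {n : ℕ} {V : Set (Fin n)} {x q p : Fin n}
    (h : ¬ ∃ z, z ≠ p ∧ z ∉ V) (hp : p ∈ V) : nextPos V x q p = q := by
  rw [nextPos, dif_neg h, if_neg (not_not.2 hp)]

theorem mem_seen_of_mem_claimedEdges {n : ℕ} {m : ℕ → Fin n} {i : ℕ} {a b : Fin n}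
    (h : s(a, b) ∈ claimedEdges m (i + 1)) : a ∈ seen m i ∧ b ∈ seen m i := by
  obtain ⟨j, hj, h⟩ := h
  rcases Sym2.eq_iff.1 h with ⟨rfl, rfl⟩ | ⟨rfl, rfl⟩
  · exact ⟨⟨j, by omega, rfl⟩, ⟨j + 1, by omega, rfl⟩⟩
  · exact ⟨⟨j + 1, by omega, rfl⟩, ⟨j, by omega, rfl⟩⟩

/-- With at least four vertices, two distinct vertices are unvisited after WMaker's first move,
so one of them differs from any given `p`. -/
theorem exists_not_mem_seen_zero {n : ℕ} (hn : 4 ≤ n) (m : ℕ → Fin n) (p : Fin n) :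
    ∃ z, z ≠ p ∧ z ∉ seen m 0 := by
  have hc : ({p, m 0, m 1} : Finset (Fin n)).card < (Finset.univ : Finset (Fin n)).card := by
    have := Finset.card_le_three (a := p) (b := m 0) (c := m 1)
    rw [Finset.card_univ, Fintype.card_fin]
    omega
  obtain ⟨z, -, hz⟩ := Finset.exists_mem_notMem_of_card_lt_card hc
  simp only [Finset.mem_insert, Finset.mem_singleton, not_or] at hz
  refine ⟨z, hz.1, ?_⟩
  rintro ⟨j, hj, rfl⟩
  have : j = 0 ∨ j = 1 := by omega
  rcases this with rfl | rfl
  · exact hz.2.1 rfl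
  · exact hz.2.2 rfl

theorem greedyBreaker_legal {n : ℕ} (hn : 4 ≤ n) (m : ℕ → Fin n)
    (hm : ∀ i, s(m i, m (i + 1)) ∉ claimedEdges (fun j => (greedyBreaker n).pos j m) i) (i : ℕ) :
    (greedyBreaker n).pos i m ≠ (greedyBreaker n).pos (i + 1) m ∧
      s((greedyBreaker n).pos i m, (greedyBreaker n).pos (i + 1) m) ∉
        claimedEdges m (i + 1) := by
  induction i with
  | zero =>
    obtain ⟨h1, h2⟩ := nextPos_of_exists (x := m (0 + 1)) (q := (breakerState m 0).1)
      (exists_not_mem_seen_zero hn m (breakerState m 0).2)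
    exact ⟨h1.symm, fun h => h2 (mem_seen_of_mem_claimedEdges h).2⟩
  | succ i ih =>
    by_cases hz : ∃ z, z ≠ (breakerState m (i + 1)).2 ∧ z ∉ seen m (i + 1)
    · obtain ⟨h1, h2⟩ := nextPos_of_exists (x := m (i + 1 + 1))
        (q := (breakerState m (i + 1)).1) hz
      exact ⟨h1.symm, fun h => h2 (mem_seen_of_mem_claimedEdges h).2⟩
    · by_cases hp : (breakerState m (i + 1)).2 ∈ seen m (i + 1)
      · have hb : (greedyBreaker n).pos (i + 1 + 1) m = (greedyBreaker n).pos i m :=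
          nextPos_of_mem hz hp
        rw [hb]
        refine ⟨ih.1.symm, ?_⟩
        rw [Sym2.eq_swap]
        rintro ⟨j, hj, h⟩
        rcases Nat.lt_succ_iff_lt_or_eq.1 hj with hj | rfl
        · exact ih.2 ⟨j, hj, h⟩
        -- WMaker's latest edge was claimed after WBreaker's previous one, so they differ.
        · exact hm (i + 1) ⟨i, by omega, h.symm⟩
      · have hb : (greedyBreaker n).pos (i + 1 + 1) m = m (i + 1 + 1) :=
          nextPos_of_not_exists hz hp
        rw [hb]
        refine ⟨fun h => hp ?_, fun h => hp (mem_seen_of_mem_claimedEdges h).1⟩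
        exact ⟨i + 1 + 1, le_rfl, h.symm⟩

/-- Against the strategy, WMaker's first `n` positions cannot exhaust the vertices: otherwise
they would be distinct, and the last step of this path would use WBreaker's edge. -/
theorem greedyBreaker_blocks {k : ℕ} (m : ℕ → Fin (k + 4))
    (hm : ∀ i, s(m i, m (i + 1)) ∉
      claimedEdges (fun j => (greedyBreaker (k + 4)).pos j m) i)
    (hs : ∀ v, ∃ j < k + 4, m j = v) : False := by
  have hinj : ∀ i < k + 4, ∀ j < k + 4, m i = m j → i = j := by
    have hsurj : Function.Surjective (fun i : Fin (k + 4) => m i) := fun v => by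
      obtain ⟨j, hj, h⟩ := hs v
      exact ⟨⟨j, hj⟩, h⟩
    intro i hi j hj h
    have := Finite.injective_iff_surjective.2 hsurj (a₁ := ⟨i, hi⟩) (a₂ := ⟨j, hj⟩) h
    simpa using this
  have hnot : ∀ i j, i + 1 < j → j < k + 4 → m j ∉ seen m i := by
    rintro i j hij hj ⟨l, hl, h⟩
    have := hinj l (by omega) j hj h
    omega
  have hout : ∀ i v, v ∉ seen m i → ∃ j, i + 1 < j ∧ j < k + 4 ∧ m j = v := by
    intro i v hv
    obtain ⟨j, hj, h⟩ := hs v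
    exact ⟨j, by by_contra hc; exact hv ⟨j, by omega, h⟩, hj, h⟩
  have hab : m (k + 2) ≠ m (k + 3) := fun h => by
    have := hinj _ (by omega) _ (by omega) h
    omega
  have hz : ∃ z, z ≠ (breakerState m k).2 ∧ z ∉ seen m k := by
    by_cases h : m (k + 2) = (breakerState m k).2
    · exact ⟨m (k + 3), fun h' => hab (h.trans h'.symm), hnot _ _ (by omega) (by omega)⟩
    · exact ⟨m (k + 2), h, hnot _ _ (by omega) (by omega)⟩
  have h1 : (breakerState m (k + 1)).2 ∉ seen m k := (nextPos_of_exists hz).2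
  obtain ⟨j, hj1, hj2, hj⟩ := hout _ _ h1
  have hlast : ∀ v, v ∉ seen m (k + 1) → v = m (k + 3) := by
    intro v hv
    obtain ⟨l, hl1, hl2, rfl⟩ := hout _ _ hv
    rw [show l = k + 3 by omega]
  apply hm (k + 2)
  refine ⟨k + 1, by omega, ?_⟩
  change s(m (k + 2), m (k + 3)) = s((breakerState m (k + 1)).2, (breakerState m (k + 2)).2)
  have hjj : j = k + 2 ∨ j = k + 3 := by omega
  rcases hjj with rfl | rfl
  · have h2 : (breakerState m (k + 2)).2 ∉ seen m (k + 1) :=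
      (nextPos_of_exists ⟨m (k + 3), fun h => hab (hj.trans h.symm),
        hnot _ _ (by omega) (by omega)⟩).2
    rw [hlast _ h2, hj]
  · have h2 : (breakerState m (k + 2)).2 = m (k + 2) := by
      refine nextPos_of_not_exists ?_ ?_
      · rintro ⟨z, hz1, hz2⟩
        exact hz1 ((hlast z hz2).trans hj)
      · rw [← hj]
        exact hnot _ _ (by omega) (by omega)
    rw [h2, ← hj, Sym2.eq_swap]

theorem visitedBy_eq_univ_of_connected {n : ℕ} (hn : 4 ≤ n) (m : ℕ → Fin n) (t : ℕ)
    (h : (walkGraph m t).Connected) : visitedBy m t = Set.univ := by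
  have : Nontrivial (Fin n) := Fin.nontrivial_iff_two_le.2 (by omega)
  refine Set.eq_univ_of_forall fun v => ?_
  obtain ⟨w, hw⟩ := h.preconnected.exists_adj_of_nontrivial v
  obtain ⟨i, hi, h⟩ := ((SimpleGraph.fromEdgeSet_adj _).1 hw).1
  rcases Sym2.eq_iff.1 h with ⟨h, -⟩ | ⟨h, -⟩
  · exact ⟨i, hi, Or.inl h.symm⟩
  · exact ⟨i, hi, Or.inr h.symm⟩

/-- **Theorem 3.**  For all `n ≥ 4`, in the `(1:1)` WMaker–WBreaker Connectivity game
on `E(K_n)` with WMaker moving first, WBreaker (the second player) has a strategy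
guaranteeing that all of his moves are legal (each claims an edge, incident with his
current position, not claimed by WMaker) and that after fewer than `n` of WMaker's moves
she has not visited all `n` vertices of `K_n`; equivalently, her graph is not a spanning
connected subgraph of `K_n`.  WMaker's walk `m` is quantified over all walks that are
legal against WBreaker's play. -/
theorem walkerBreaker_delays_connectivity :
    ∀ n : ℕ, 4 ≤ n →
      ∃ τ : BreakerStrategy n,
        ∀ m : ℕ → Fin n,
          (∀ i, m i ≠ m (i + 1)) →
          (∀ i, s(m i, m (i + 1)) ∉ claimedEdges (fun j => τ.pos j m) i) →
          (∀ i, τ.pos i m ≠ τ.pos (i + 1) m ∧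
              s(τ.pos i m, τ.pos (i + 1) m) ∉ claimedEdges m (i + 1)) ∧
          ∀ t, t < n → visitedBy m t ≠ Set.univ ∧ ¬ (walkGraph m t).Connected := by
  intro n hn
  refine ⟨greedyBreaker n, fun m _ hm => ⟨greedyBreaker_legal hn m hm, fun t ht => ?_⟩⟩
  have key : visitedBy m t ≠ Set.univ := by
    intro hv
    obtain ⟨k, rfl⟩ := Nat.exists_eq_add_of_le' hn
    refine greedyBreaker_blocks m hm fun v => ?_
    obtain ⟨i, hi, h | h⟩ : v ∈ visitedBy m t := hv ▸ Set.mem_univ v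
    · exact ⟨i, by omega, h⟩
    · exact ⟨i + 1, by omega, h⟩
  exact ⟨key, fun h => key (visitedBy_eq_univ_of_connected hn m t h)⟩
end

section
/- In the (1:1) WMaker–WBreaker game on the edge set of K_n (WBreaker moving first), if WMaker plays according to the strategy S, then as long as |U| > 2, at the end of each completed round the vertex w at which WMaker is positioned satisfies d_B(w, U) ≤ 1, i.e., w has at most one B-neighbour among the vertices unvisited by WMaker. -/
/-!
The invariant behind the bound is that WBreaker has no edge inside `U` at the end of any round
(while `|U| > 2`). Since WBreaker claims one edge per round, at most one edge of his lies inside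
`U` when WMaker is about to move, and if there is one she moves to an endpoint of it. That endpoint
leaves `U`, which restores the invariant, and the other endpoint is its only possible neighbour in
the new `U`. If there is no such edge, she moves to a vertex of `U`, which then has no
`B`-neighbour in `U`.
-/

open scoped Classical

/-- `unvisited m t` is the set `U` of vertices not yet visited by WMaker after her
first `t` moves. -/
def unvisited {n : ℕ} (m : ℕ → Fin n) (t : ℕ) : Set (Fin n) :=
  (visitedBy m t)ᶜ

/-- `degB b t v` is the degree `d_B(v)` of the vertex `v` in WBreaker's graph after
his first `t` moves. -/
noncomputable def degB {n : ℕ} (b : ℕ → Fin n) (t : ℕ) (v : Fin n) : ℕ :=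
  {u : Fin n | s(v, u) ∈ claimedEdges b t}.ncard

/-- `degBIn b t v A` is the degree `d_B(v, A)` of `v` towards the set `A` in
WBreaker's graph after his first `t` moves. -/
noncomputable def degBIn {n : ℕ} (b : ℕ → Fin n) (t : ℕ) (v : Fin n)
    (A : Set (Fin n)) : ℕ :=
  {u : Fin n | u ∈ A ∧ s(v, u) ∈ claimedEdges b t}.ncard

/-- A legal play of the `(1:1)` WMaker–WBreaker game on `E(K_n)` in which WBreaker
moves first: `b j` (resp. `m j`) is WBreaker's (resp. WMaker's) position after `j`
moves; round `i + 1` consists of WBreaker's move `b i → b (i+1)` followed by WMaker's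
move `m i → m (i+1)`.  Each move claims an edge with distinct endpoints, incident with
the player's current position, that has not been claimed by the opponent. -/
def LegalPlay {n : ℕ} (b m : ℕ → Fin n) : Prop :=
  (∀ i, b i ≠ b (i + 1)) ∧ (∀ i, m i ≠ m (i + 1)) ∧
  (∀ i, s(b i, b (i + 1)) ∉ claimedEdges m i) ∧
  (∀ i, s(m i, m (i + 1)) ∉ claimedEdges b (i + 1))

/-- WMaker's strategy `S`.  She starts at the vertex `b 1` in which WBreaker finished
his first move and claims an edge `v₁u` with `d_B(u) = 0`.  In every later round
(WMaker's `(i+1)`-st move, from her position `w = m i`, after WBreaker's `(i+1)`-st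
move): if there is an edge `pq` of WBreaker with both endpoints in `U`, she moves to an
endpoint of such an edge (choosing, whenever the edges to both endpoints are free, an
endpoint of maximal `d_B`-degree); otherwise, as long as `|U| ≥ 3`, she moves to an
unvisited vertex `u ∈ U`, reachable by a free edge, maximizing `d_B(u)` among such
vertices (if all of these have `d_B(u) = 0` this is an arbitrary free edge `wu`,
`u ∈ U`).  Ties are broken arbitrarily, so `FollowsS` is the predicate that a given
play conforms to some instance of `S`. -/
def FollowsS {n : ℕ} (b m : ℕ → Fin n) : Prop :=
  m 0 = b 1 ∧ degB b 1 (m 1) = 0 ∧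
  ∀ i, 1 ≤ i →
    ((∃ p q, p ∈ unvisited m i ∧ q ∈ unvisited m i ∧
        s(p, q) ∈ claimedEdges b (i + 1)) →
      ∃ q, m (i + 1) ∈ unvisited m i ∧ q ∈ unvisited m i ∧
        s(m (i + 1), q) ∈ claimedEdges b (i + 1) ∧
        (s(m i, q) ∉ claimedEdges b (i + 1) →
          degB b (i + 1) q ≤ degB b (i + 1) (m (i + 1)))) ∧
    ((¬ ∃ p q, p ∈ unvisited m i ∧ q ∈ unvisited m i ∧
        s(p, q) ∈ claimedEdges b (i + 1)) →
      3 ≤ (unvisited m i).ncard →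
        m (i + 1) ∈ unvisited m i ∧
        ∀ u ∈ unvisited m i, s(m i, u) ∉ claimedEdges b (i + 1) →
          degB b (i + 1) u ≤ degB b (i + 1) (m (i + 1)))

lemma claimedEdges_succ {n : ℕ} {w : ℕ → Fin n} {t : ℕ} {e : Sym2 (Fin n)}
    (h : e ∈ claimedEdges w (t + 1)) : e ∈ claimedEdges w t ∨ e = s(w t, w (t + 1)) := by
  obtain ⟨i, hi, rfl⟩ := h
  rcases Nat.lt_succ_iff_lt_or_eq.mp hi with h | rfl
  · exact Or.inl ⟨i, h, rfl⟩
  · exact Or.inr rfl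

lemma unvisited_succ_subset {n : ℕ} (m : ℕ → Fin n) (t : ℕ) :
    unvisited m (t + 1) ⊆ unvisited m t :=
  fun _ hv ⟨i, hi, h⟩ => hv ⟨i, by omega, h⟩

lemma position_not_mem_unvisited {n : ℕ} (m : ℕ → Fin n) (t : ℕ) :
    m (t + 1) ∉ unvisited m (t + 1) :=
  fun h => h ⟨t, by omega, Or.inr rfl⟩

/-- WBreaker has no edge with both endpoints in `U` after `t` rounds. -/
def NoEdgeInU {n : ℕ} (b m : ℕ → Fin n) (t : ℕ) : Prop :=
  ∀ p ∈ unvisited m t, ∀ q ∈ unvisited m t, s(p, q) ∉ claimedEdges b t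

/-- WBreaker's only edge after the first round is incident with WMaker's starting vertex. -/
lemma noEdgeInU_one {n : ℕ} {b m : ℕ → Fin n} (h0 : m 0 = b 1) : NoEdgeInU b m 1 := by
  rintro p hp q hq ⟨i, hi, he⟩
  obtain rfl : i = 0 := by omega
  have hb : b 1 ∉ unvisited m 1 := fun h => h ⟨0, by omega, Or.inl h0⟩
  rcases Sym2.eq_iff.mp he with ⟨-, rfl⟩ | ⟨rfl, -⟩
  · exact hb hq
  · exact hb hp

/-- One round of strategy `S` preserves the invariant and leaves WMaker at a vertex with at most
one WBreaker-neighbour in the new `U`. -/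
lemma round_step {n : ℕ} {b m : ℕ → Fin n} (hS : FollowsS b m) {t : ℕ} (ht : 1 ≤ t)
    (hU : 2 < (unvisited m t).ncard) (hI : NoEdgeInU b m t) :
    NoEdgeInU b m (t + 1) ∧ degBIn b (t + 1) (m (t + 1)) (unvisited m (t + 1)) ≤ 1 := by
  have hsub := unvisited_succ_subset m t
  have hnot := position_not_mem_unvisited m t
  -- An edge of WBreaker inside the old `U` must be the one he has just claimed.
  have hnew : ∀ p ∈ unvisited m t, ∀ q ∈ unvisited m t, s(p, q) ∈ claimedEdges b (t + 1) →
      s(p, q) = s(b t, b (t + 1)) := fun p hp q hq h =>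
    (claimedEdges_succ h).resolve_left (hI p hp q hq)
  obtain ⟨h1, h2⟩ := hS.2.2 t ht
  by_cases hex : ∃ p q, p ∈ unvisited m t ∧ q ∈ unvisited m t ∧
      s(p, q) ∈ claimedEdges b (t + 1)
  · obtain ⟨q, hm, hq, hmq, -⟩ := h1 hex
    have hnew_mq := hnew _ hm _ hq hmq
    constructor
    · intro x hx y hy hxy
      have he := (hnew _ (hsub hx) _ (hsub hy) hxy).trans hnew_mq.symm
      rcases Sym2.eq_iff.mp he with ⟨rfl, -⟩ | ⟨-, rfl⟩
      · exact hnot hx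
      · exact hnot hy
    · refine (Set.ncard_le_ncard (t := {q}) ?_).trans (Set.ncard_singleton q).le
      rintro u ⟨hu, hmu⟩
      exact Sym2.congr_right.mp ((hnew _ hm _ (hsub hu) hmu).trans hnew_mq.symm)
  · obtain ⟨hm, -⟩ := h2 hex hU
    constructor
    · exact fun x hx y hy hxy => hex ⟨x, y, hsub hx, hsub hy, hxy⟩
    · refine (Set.ncard_le_ncard (t := ∅) ?_).trans (by simp)
      rintro u ⟨hu, hmu⟩
      exact hex ⟨_, u, hm, hsub hu, hmu⟩

lemma noEdgeInU_of_followsS {n : ℕ} {b m : ℕ → Fin n} (hS : FollowsS b m) :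
    ∀ t, 1 ≤ t → 2 < (unvisited m t).ncard → NoEdgeInU b m t := by
  intro t ht
  induction t, ht using Nat.le_induction with
  | base => exact fun _ => noEdgeInU_one hS.1
  | succ t ht ih =>
    intro hU
    have hUt := hU.trans_le (Set.ncard_le_ncard (unvisited_succ_subset m t))
    exact (round_step hS ht hUt (ih hUt)).1

/-- **Corollary 1.**  In the `(1:1)` WMaker–WBreaker game on `E(K_n)` (WBreaker first),
if WMaker plays according to strategy `S` then, as long as `|U| > 2`, at the end of each
completed round the vertex `w = m t` at which WMaker is positioned satisfies
`d_B(w, U) ≤ 1`. -/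
theorem strategyS_position_low_degree_to_U {n : ℕ} (b m : ℕ → Fin n)
    (hlegal : LegalPlay b m) (hS : FollowsS b m) :
    ∀ t, 1 ≤ t → 2 < (unvisited m t).ncard →
      degBIn b t (m t) (unvisited m t) ≤ 1 := by
  intro t ht hU
  obtain rfl | ⟨t, rfl, ht'⟩ : t = 1 ∨ ∃ k, t = k + 1 ∧ 1 ≤ k := by
    rcases ht.eq_or_lt with h | h
    · exact Or.inl h.symm
    · exact Or.inr ⟨t - 1, by omega, by omega⟩
  · have hle : degBIn b 1 (m 1) (unvisited m 1) ≤ degB b 1 (m 1) :=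
      Set.ncard_le_ncard fun _ h => h.2
    -- The first vertex WMaker moves to has degree zero in WBreaker's graph.
    have hdeg := hS.2.1
    omega
  · have hUt := hU.trans_le (Set.ncard_le_ncard (unvisited_succ_subset m t))
    exact (round_step hS ht' hUt (noEdgeInU_of_followsS hS t ht' hUt)).2
end

section
/- For all n ≥ 4, in the (1:1) WMaker–WBreaker Hamilton cycle game on the edge set of K_n with WMaker moving first, WBreaker (as the second player) has a strategy that guarantees that WMaker cannot complete a Hamilton cycle in fewer than n+1 of her moves. -/
/-!
A Hamilton cycle of `K_n` built in at most `n` moves of a walk forces the walk to run once around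
the cycle: every vertex meets two of the at most `n` steps, hence at least one that is not the last
step, so the positions `m 0, …, m (n - 1)` exhaust the vertices and are pairwise distinct, and then
the degree of `m 0` forces `m n = m 0` (`hamiltonian_walk`).

WBreaker oscillates along one edge between `m 0` and a vertex `y ∉ {m 0, m 1}`, with the parity
chosen so that he stands at `m 0` when WMaker has made `n - 3` moves. He then moves to a vertex `u`
that she has not visited. If her next move goes to `u`, he moves from `u` to a vertex `v` still
unvisited; otherwise he returns to `m 0`. From then on he repeats that edge. Along a Hamilton cycle
`m 0, …, m (n - 1), m 0`, either `u = m (n - 2)` and `v = m (n - 1)`, so that the step `uv` is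
blocked, or `u = m (n - 1)` and the closing step `u (m 0)` is blocked. In the code `n = k + 4`.
-/

open scoped Classical

/-- In a Hamiltonian walk graph every vertex is met by two different steps of the walk. -/
lemma two_steps {n : ℕ} (hn : 4 ≤ n) {m : ℕ → Fin n} {t : ℕ}
    (h : (walkGraph m t).IsHamiltonian) (x : Fin n) :
    ∃ i j, i < j ∧ j < t ∧ (x = m i ∨ x = m (i + 1)) ∧ (x = m j ∨ x = m (j + 1)) := by
  obtain ⟨a, p, hp⟩ := h (by simp; omega)
  have h2 := hp.isCycle.ncard_neighborSet_toSubgraph_eq_two (hp.mem_support x)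
  obtain ⟨y, z, hyz, hs⟩ := Set.ncard_eq_two.1 h2
  have key : ∀ w, w ∈ p.toSubgraph.neighborSet x → ∃ i, i < t ∧ s(x, w) = s(m i, m (i + 1)) := by
    intro w hw
    have hadj : (walkGraph m t).Adj x w := SimpleGraph.Subgraph.Adj.adj_sub hw
    exact ((SimpleGraph.fromEdgeSet_adj _).1 hadj).1
  obtain ⟨i, hi, hiy⟩ := key y (by simp [hs])
  obtain ⟨j, hj, hjz⟩ := key z (by simp [hs])
  have hij : i ≠ j := by
    rintro rfl
    exact hyz (Sym2.congr_right.1 (hiy.trans hjz.symm))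
  have hx : ∀ {w l}, s(x, w) = s(m l, m (l + 1)) → x = m l ∨ x = m (l + 1) := by
    intro w l hl
    exact Sym2.mem_iff.1 (hl ▸ Sym2.mem_mk_left x w)
  rcases lt_or_gt_of_ne hij with hlt | hlt
  · exact ⟨i, j, hlt, hj, hx hiy, hx hjz⟩
  · exact ⟨j, i, hlt, hi, hx hjz, hx hiy⟩

/-- A walk whose first `t ≤ n` steps span a Hamiltonian graph visits every vertex among its first
`n` positions and closes up after `n` steps. -/
lemma hamiltonian_walk {n : ℕ} (hn : 4 ≤ n) {m : ℕ → Fin n} {t : ℕ} (ht : t ≤ n)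
    (h : (walkGraph m t).IsHamiltonian) :
    (∀ x, ∃ i < n, m i = x) ∧ m n = m 0 := by
  have hsurj : ∀ x, ∃ i < n, m i = x := by
    intro x
    obtain ⟨i, j, hij, hj, hi, -⟩ := two_steps hn h x
    rcases hi with hi | hi
    · exact ⟨i, by omega, hi.symm⟩
    · exact ⟨i + 1, by omega, hi.symm⟩
  refine ⟨hsurj, ?_⟩
  have hinj : Function.Injective (fun i : Fin n => m i) := by
    rw [Finite.injective_iff_surjective]
    intro x
    obtain ⟨i, hi, rfl⟩ := hsurj x
    exact ⟨⟨i, hi⟩, rfl⟩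
  have h0 : ∀ j, 0 < j → j < n → m 0 ≠ m j := by
    intro j hj hjn he
    have := @hinj ⟨0, by omega⟩ ⟨j, hjn⟩ he
    simp only [Fin.mk.injEq] at this
    omega
  obtain ⟨i, j, hij, hj, -, hx⟩ := two_steps hn h (m 0)
  rcases hx with hx | hx
  · exact absurd hx (h0 j (by omega) (by omega))
  · by_cases hjn : j + 1 < n
    · exact absurd hx (h0 (j + 1) (by omega) hjn)
    · rw [hx]
      congr 1
      omega

/-- A vertex not among `m 0, …, m i`, whenever there is one. -/
noncomputable def fresh {n : ℕ} [Nonempty (Fin n)] (i : ℕ) (m : ℕ → Fin n) : Fin n :=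
  Classical.epsilon fun x => ∀ j ≤ i, m j ≠ x

lemma fresh_spec {n : ℕ} [Nonempty (Fin n)] {i : ℕ} (hi : i + 1 < n) (m : ℕ → Fin n) :
    ∀ j ≤ i, m j ≠ fresh i m := by
  refine Classical.epsilon_spec (p := fun x => ∀ j ≤ i, m j ≠ x) ?_
  by_contra! hc
  have hsub : (Finset.univ : Finset (Fin n)) ⊆ (Finset.range (i + 1)).image m := by
    intro x _
    obtain ⟨j, hj, hx⟩ := hc x
    exact Finset.mem_image.2 ⟨j, by simp; omega, hx⟩
  have := (Finset.card_le_card hsub).trans Finset.card_image_le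
  simp at this
  omega

lemma fresh_congr {n : ℕ} [Nonempty (Fin n)] {i : ℕ} {m m' : ℕ → Fin n}
    (h : ∀ j ≤ i, m j = m' j) : fresh i m = fresh i m' := by
  unfold fresh
  congr 1
  funext x
  exact propext (forall₂_congr fun j hj => by rw [h j hj])

/-- WBreaker's position after `i` moves on `k + 4` vertices: up to move `k` he alternates between
`m 0` and `y = fresh 1 m`, standing at `m 0` after move `k`; from move `k + 1` on he alternates
between `u = fresh (k + 1) m` and either `v = fresh (k + 2) m` or `m 0`, according to whether
WMaker has answered by moving to `u`. -/
noncomputable def breakerPos (k i : ℕ) (m : ℕ → Fin (k + 4)) : Fin (k + 4) :=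
  if i % 2 = k % 2 then
    if i ≤ k then m 0
    else if m (k + 2) = fresh (k + 1) m then fresh (k + 2) m else m 0
  else if i ≤ k then fresh 1 m else fresh (k + 1) m

lemma breakerPos_causal (k i : ℕ) (m m' : ℕ → Fin (k + 4)) (h : ∀ j ≤ max i 1, m j = m' j) :
    breakerPos k i m = breakerPos k i m' := by
  unfold breakerPos
  split_ifs with h1 h2 h3 h4 h5 h6 <;>
    first
    | exact h 0 (by omega)
    | exact fresh_congr fun j hj => h j (by omega)
    | skip
  all_goals
    rw [h (k + 2) (by omega),
      fresh_congr (i := k + 1) (m' := m') fun j hj => h j (by omega)] at h3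
    contradiction

/-- WBreaker's play up to move `k` stays on the edge between `m 0` and `y`. -/
lemma breaker_edge_early {k i : ℕ} (hi : i < k) (m : ℕ → Fin (k + 4)) :
    s(breakerPos k i m, breakerPos k (i + 1) m) = s(m 0, fresh 1 m) := by
  unfold breakerPos
  rcases Nat.mod_two_eq_zero_or_one (i + k) with h | h
  · rw [if_pos (by omega), if_pos (by omega), if_neg (by omega), if_pos (by omega)]
  · rw [if_neg (by omega), if_pos (by omega), if_pos (by omega), if_pos (by omega), Sym2.eq_swap]

lemma breaker_edge_middle (k : ℕ) (m : ℕ → Fin (k + 4)) :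
    s(breakerPos k k m, breakerPos k (k + 1) m) = s(m 0, fresh (k + 1) m) := by
  unfold breakerPos
  rw [if_pos rfl, if_pos le_rfl, if_neg (by omega), if_neg (by omega)]

lemma breaker_edge_late {k i : ℕ} (hi : k < i) (m : ℕ → Fin (k + 4)) :
    s(breakerPos k i m, breakerPos k (i + 1) m) =
      s(fresh (k + 1) m,
        if m (k + 2) = fresh (k + 1) m then fresh (k + 2) m else m 0) := by
  have h1 : ¬ i ≤ k := by omega
  have h2 : ¬ i + 1 ≤ k := by omega
  unfold breakerPos
  rw [if_neg h1, if_neg h1, if_neg h2, if_neg h2]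
  by_cases h : i % 2 = k % 2
  · have h' : ¬ (i + 1) % 2 = k % 2 := by omega
    rw [if_pos h, if_neg h', Sym2.eq_swap]
  · have h' : (i + 1) % 2 = k % 2 := by omega
    rw [if_neg h, if_pos h']

/-- For all `n ≥ 4`, in the `(1:1)` WMaker–WBreaker Hamilton cycle game on `E(K_n)`
with WMaker moving first, WBreaker (the second player) has a strategy guaranteeing
that all of his moves are legal and that WMaker cannot complete a Hamilton cycle of
`K_n` in fewer than `n + 1` of her moves, i.e. after any `t ≤ n` of her moves the graph
of her claimed edges is not Hamiltonian.  WMaker's walk `m` is quantified over all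
walks that are legal against WBreaker's play. -/
theorem walkerBreaker_delays_hamilton_cycle :
    ∀ n : ℕ, 4 ≤ n →
      ∃ τ : BreakerStrategy n,
        ∀ m : ℕ → Fin n,
          (∀ i, m i ≠ m (i + 1)) →
          (∀ i, s(m i, m (i + 1)) ∉ claimedEdges (fun j => τ.pos j m) i) →
          (∀ i, τ.pos i m ≠ τ.pos (i + 1) m ∧
              s(τ.pos i m, τ.pos (i + 1) m) ∉ claimedEdges m (i + 1)) ∧
          ∀ t, t ≤ n → ¬ (walkGraph m t).IsHamiltonian := by
  intro n hn
  obtain ⟨k, rfl⟩ : ∃ k, n = k + 4 := ⟨n - 4, by omega⟩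
  refine ⟨⟨breakerPos k, breakerPos_causal k⟩, fun m _ hM => ⟨?_, ?_⟩⟩
  · have hy := fresh_spec (i := 1) (by omega) m
    have hu := fresh_spec (i := k + 1) (by omega) m
    have hv := fresh_spec (i := k + 2) (by omega) m
    intro i
    change breakerPos k i m ≠ breakerPos k (i + 1) m ∧
      s(breakerPos k i m, breakerPos k (i + 1) m) ∉ claimedEdges m (i + 1)
    rw [Ne, ← Sym2.mk_isDiag_iff]
    rcases lt_trichotomy i k with hi | rfl | hi
    · rw [breaker_edge_early hi]
      refine ⟨fun h => hy 0 (by omega) (Sym2.mk_isDiag_iff.1 h), ?_⟩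
      rintro ⟨j, hj, he⟩
      rcases Nat.eq_zero_or_pos j with rfl | hj0
      · exact hy 1 le_rfl (Sym2.congr_right.1 he).symm
      · exact hM j ⟨0, hj0, by rw [← he]; exact (breaker_edge_early (by omega) m).symm⟩
    · rw [breaker_edge_middle]
      refine ⟨fun h => hu 0 (by omega) (Sym2.mk_isDiag_iff.1 h), ?_⟩
      rintro ⟨j, hj, he⟩
      rcases Sym2.mem_iff.1 (he ▸ Sym2.mem_mk_right (m 0) (fresh (i + 1) m)) with h | h
      · exact hu j (by omega) h.symm
      · exact hu (j + 1) (by omega) h.symm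
    · rw [breaker_edge_late hi]
      constructor
      · rw [Sym2.mk_isDiag_iff]
        split_ifs with hc
        · rw [← hc]
          exact hv (k + 2) le_rfl
        · exact (hu 0 (by omega)).symm
      · rintro ⟨j, hj, he⟩
        by_cases hjk : k + 2 ≤ j
        · -- Later than WBreaker's move `k + 2` the edge belongs to him, so WMaker cannot take it.
          exact hM j ⟨k + 1, hjk, by rw [← he]; exact (breaker_edge_late (by omega) m).symm⟩
        · split_ifs at he with hc
          · rcases Sym2.mem_iff.1 (he ▸ Sym2.mem_mk_right _ (fresh (k + 2) m)) with h | h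
            · exact hv j (by omega) h.symm
            · exact hv (j + 1) (by omega) h.symm
          · rcases Sym2.mem_iff.1 (he ▸ Sym2.mem_mk_left (fresh (k + 1) m) _) with h | h
            · exact hu j (by omega) h.symm
            · by_cases hj1 : j = k + 1
              · subst hj1
                exact hc h.symm
              · exact hu (j + 1) (by omega) h.symm
  · intro t ht hH
    obtain ⟨hsurj, hclose⟩ := hamiltonian_walk hn ht hH
    have hu := fresh_spec (i := k + 1) (by omega) m
    have hv := fresh_spec (i := k + 2) (by omega) m
    by_cases hc : m (k + 2) = fresh (k + 1) m
    · obtain ⟨i, hi, hiv⟩ := hsurj (fresh (k + 2) m)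
      obtain rfl : i = k + 3 := by
        by_contra hne
        exact hv i (by omega) hiv
      refine hM (k + 2) ⟨k + 1, by omega, ?_⟩
      refine Eq.trans ?_ (breaker_edge_late (by omega) m).symm
      rw [if_pos hc, hc, ← hiv]
    · obtain ⟨i, hi, hiu⟩ := hsurj (fresh (k + 1) m)
      obtain rfl : i = k + 3 := by
        by_contra hne
        by_cases hi2 : i = k + 2
        · exact hc (hi2 ▸ hiu)
        · exact hu i (by omega) hiu
      refine hM (k + 3) ⟨k, by omega, ?_⟩
      refine Eq.trans ?_ (breaker_edge_middle k m).symm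
      rw [hiu, hclose, Sym2.eq_swap]
end

section
/- In the (1:2) WMaker–WBreaker game on the edge set of K_n, where in each round WMaker claims one edge and WBreaker claims two edges (both players moving according to walks, with WBreaker additionally allowed to re-traverse his own previously claimed edges when moving), WBreaker has a strategy that isolates a vertex in WMaker's graph: there is a vertex of K_n that WMaker never visits, so WMaker cannot build any spanning structure. -/
/-!
WBreaker fixes a vertex `z` different from the endpoints of WMaker's first edge. His walk
alternates between `z` and WMaker's successive positions: `m 0, z, m 1, z, m 2, z, …`, so after
each round he stands on WMaker's current position, having just claimed the edge from `z` to it.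
WMaker can therefore never step to `z` (`isolatingWalk_blocks`), and hence every edge at `z` is free
for WBreaker, which makes all of his moves legal. Choosing `z` needs only `n ≥ 3`.
-/

open scoped Classical

/-- A strategy for WBreaker in the `(1:2)` WMaker–WBreaker game on `E(K_n)`:
in each round WMaker makes one move and then WBreaker makes two moves, so WBreaker's
steps `2k` and `2k + 1` (taking him from position `pos (2k)` via `pos (2k+1)` to
`pos (2k+2)`) are played after WMaker's `(k+1)`-st move.  Given WMaker's walk `m`
(`m j` is her position after `j` moves), `pos j m` is WBreaker's position after his
`j`-th step.  Causality: WBreaker's position after `j` steps may depend only on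
WMaker's positions `m 0, …, m (max ((j+1)/2) 1)`, the part of her walk already played. -/
structure Breaker2Strategy (n : ℕ) where
  pos : ℕ → (ℕ → Fin n) → Fin n
  causal : ∀ j m m', (∀ i ≤ max ((j + 1) / 2) 1, m i = m' i) → pos j m = pos j m'

/-- WBreaker's isolating walk around `z` against WMaker's walk `m`: he is at `z` after an odd
number of steps and at WMaker's position `m k` after `2 * k` steps. -/
def isolatingWalk {n : ℕ} (z : Fin n) (m : ℕ → Fin n) (j : ℕ) : Fin n :=
  if j % 2 = 0 then m (j / 2) else z

lemma isolatingWalk_even {n : ℕ} (z : Fin n) (m : ℕ → Fin n) (k : ℕ) :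
    isolatingWalk z m (2 * k) = m k := by
  simp [isolatingWalk]

lemma isolatingWalk_odd {n : ℕ} (z : Fin n) (m : ℕ → Fin n) (k : ℕ) :
    isolatingWalk z m (2 * k + 1) = z := by
  simp [isolatingWalk]

/-- A walk of WMaker that starts with an edge avoiding `z` and respects the edges claimed by the
isolating walk never reaches `z`: from `m k` with `k ≥ 1` the edge to `z` has been claimed in
WBreaker's step from `z` to `m k`. -/
lemma isolatingWalk_blocks {n : ℕ} {z : Fin n} {m : ℕ → Fin n} (h0 : m 0 ≠ z) (h1 : m 1 ≠ z)
    (hm : ∀ i, s(m i, m (i + 1)) ∉ claimedEdges (isolatingWalk z m) (2 * i)) (i : ℕ) :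
    m i ≠ z := by
  match i with
  | 0 => exact h0
  | 1 => exact h1
  | k + 2 =>
    intro h
    refine hm (k + 1) ⟨2 * k + 1, by omega, ?_⟩
    rw [isolatingWalk_odd, show 2 * k + 1 + 1 = 2 * (k + 1) by ring, isolatingWalk_even,
      show k + 1 + 1 = k + 2 by ring, h, Sym2.eq_swap]

/-- In the `(1:2)` WMaker–WBreaker game on `E(K_n)` (for all sufficiently large `n`),
where in each round WMaker claims one edge and WBreaker claims two edges, both players
moving according to walks and WBreaker additionally being allowed to re-traverse his own
previously claimed edges, WBreaker has a strategy that isolates a vertex in WMaker's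
graph: all of WBreaker's moves are legal (each step either re-traverses one of his own
edges or claims an edge not claimed by WMaker) and there is a vertex `z` of `K_n` that
WMaker never visits, so she cannot build any spanning structure.  WMaker's walk `m` is
quantified over all walks that are legal against WBreaker's play: her `(i+1)`-st move
claims an edge with distinct endpoints not claimed by WBreaker (who has made `2 i` steps
at that moment). -/
theorem walkerBreaker_bias_two_isolates_vertex :
    ∃ N : ℕ, ∀ n : ℕ, N ≤ n →
      ∃ τ : Breaker2Strategy n,
        ∀ m : ℕ → Fin n,
          (∀ i, m i ≠ m (i + 1)) →
          (∀ i, s(m i, m (i + 1)) ∉ claimedEdges (fun j => τ.pos j m) (2 * i)) →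
          (∀ j, τ.pos j m ≠ τ.pos (j + 1) m ∧
              (s(τ.pos j m, τ.pos (j + 1) m) ∈ claimedEdges (fun k => τ.pos k m) j ∨
               s(τ.pos j m, τ.pos (j + 1) m) ∉ claimedEdges m (j / 2 + 1))) ∧
          ∃ z : Fin n, ∀ t, z ∉ visitedBy m t := by
  refine ⟨3, fun n hn => ?_⟩
  have hz : ∀ a b : Fin n, ∃ z, a ≠ z ∧ b ≠ z := by
    intro a b
    obtain ⟨z, hz⟩ : ∃ z, z ∉ ({a, b} : Finset (Fin n)) := by
      by_contra! h
      have h1 : Fintype.card (Fin n) ≤ ({a, b} : Finset (Fin n)).card :=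
        Finset.card_le_card fun x _ => h x
      have h2 : ({a, b} : Finset (Fin n)).card ≤ 2 := Finset.card_le_two
      rw [Fintype.card_fin] at h1
      omega
    simp only [Finset.mem_insert, Finset.mem_singleton, not_or] at hz
    exact ⟨z, Ne.symm hz.1, Ne.symm hz.2⟩
  choose z hz0 hz1 using hz
  refine ⟨⟨fun j m => isolatingWalk (z (m 0) (m 1)) m j, ?_⟩, ?_⟩
  · intro j m m' h
    simp only [isolatingWalk]
    rw [h 0 (by omega), h 1 (by omega), h (j / 2) (by omega)]
  · intro m _ hm
    have hne : ∀ i, m i ≠ z (m 0) (m 1) :=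
      isolatingWalk_blocks (hz0 _ _) (hz1 _ _) hm
    simp only
    generalize z (m 0) (m 1) = v at hne
    -- WMaker's graph contains no edge at `v`, so WBreaker may use all of them.
    have hfree : ∀ x t, s(x, v) ∉ claimedEdges m t := by
      rintro x t ⟨i, _, he⟩
      rcases Sym2.mem_iff.1 (he ▸ Sym2.mem_mk_right x v) with h | h
      · exact hne i h.symm
      · exact hne (i + 1) h.symm
    refine ⟨fun j => ?_, v, ?_⟩
    · obtain ⟨k, rfl | rfl⟩ := Nat.even_or_odd' j
      · rw [isolatingWalk_even, isolatingWalk_odd]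
        exact ⟨hne k, Or.inr (hfree _ _)⟩
      · rw [isolatingWalk_odd, show 2 * k + 1 + 1 = 2 * (k + 1) by ring, isolatingWalk_even]
        refine ⟨(hne _).symm, Or.inr ?_⟩
        rw [Sym2.eq_swap]
        exact hfree _ _
    · rintro t ⟨i, _, h | h⟩
      · exact hne i h
      · exact hne (i + 1) h
end
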